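/- arXiv:1909.10683 — 6 statements merged into one kernel-verified Lean document; each statement's English description precedes it below -/
import Mathlib

section
/- Let q ≥ 2 be an integer and let γ, δ ≥ 0 be reals such that for every integer z with 1 ≤ z ≤ q−1 one has γ + 2zδ ≥ ((2q−1)z − z²)/q (i.e., (γ,δ) lies outside the feasibility polygon F_q with vertices (i(i−1)/q, (q−i)/q) for i = 1,…,q and (0,0)). Then for every integer L ≥ 1 and every real R > 0 there exists n₀ such that for all n ≥ n₀: every code C ⊆ (Fin q)ⁿ that is list-decodable from ⌈δn⌉ deletions and ⌈γn⌉ insertions with list size L satisfies |C| < 2^(R·n). -/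
/-- `C` is list-decodable from `D` deletions and `I` insertions with list size `L`. -/
def listDecodable {α : Type*} (C : Finset (List α)) (D I : ℕ) (L : ℝ) : Prop :=
  ∀ y : List α,
    (({x | x ∈ C ∧ ∃ u : List α, u.Sublist x ∧ u.Sublist y ∧
        x.length - u.length ≤ D ∧ y.length - u.length ≤ I} : Set (List α)).ncard : ℝ) ≤ L

/-! Cut a word of length `n` into a remainder shorter than `q` and blocks of lengths `q * a` and
`q * b`. Some `i` letters fill at least `i * a` positions of a block of length `q * a`, so `i * a`
letters of the block survive as a subsequence of the `i * a`-fold repetition of these letters in a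
fixed order; this costs `(q - i) * a` deletions and `i * (i - 1) * a` insertions, that is, `q * a`
times a vertex of `F_q`. A point outside `F_q` dominates a convex combination of two consecutive
vertices, and using one vertex on the first block and the next one on the second realizes that
combination. The resulting centers depend only on the remainder and on two sets of letters, so
their number is bounded independently of `n`, and each of them is close to at most `L`
codewords. -/

open Filter Finset

section Counting

lemma exists_subset_card_eq_nsmul_le_sum {ι M : Type*} [AddCommMonoid M] [LinearOrder M]
    [IsOrderedCancelAddMonoid M] {f : ι → M} {a : M} {s : Finset ι} (hs : #s • a ≤ ∑ x ∈ s, f x)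
    {i : ℕ} (hi : i ≤ #s) : ∃ t ⊆ s, #t = i ∧ i • a ≤ ∑ x ∈ t, f x := by
  classical
  induction hi using Nat.decreasingInduction with
  | self => exact ⟨s, Subset.rfl, rfl, hs⟩
  | of_succ i _ ih =>
    obtain ⟨t, hts, htcard, hsum⟩ := ih
    obtain ⟨x, hx, hmin⟩ := t.exists_min_image f (card_pos.1 (by lia))
    have hcard : #(t.erase x) = i := by rw [card_erase_of_mem hx, htcard, Nat.add_sub_cancel]
    refine ⟨t.erase x, (erase_subset x t).trans hts, hcard, ?_⟩
    by_contra! hlt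
    have hfx : f x < a := by
      refine lt_of_nsmul_lt_nsmul_right i (lt_of_le_of_lt ?_ hlt)
      rw [← hcard]
      exact card_nsmul_le_sum _ _ _ fun y hy ↦ hmin y (mem_of_mem_erase hy)
    refine hsum.not_gt ?_
    rw [← sum_erase_add _ _ hx, succ_nsmul]
    exact add_lt_add hlt hfx

lemma length_filter_mem_eq_sum_count {α : Type*} [DecidableEq α] (S : Finset α) (l : List α) :
    (l.filter (· ∈ S)).length = ∑ s ∈ S, l.count s := by
  have hmem : ∀ x ∈ (l.filter (· ∈ S) : Multiset α), x ∈ S := fun x hx ↦ by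
    simpa using (List.mem_filter.1 hx).2
  rw [← Multiset.coe_card, ← Multiset.sum_count_eq_card hmem]
  refine sum_congr rfl fun s hs ↦ ?_
  rw [Multiset.coe_count, List.count_filter (by simpa using hs)]

lemma exists_card_eq_mul_le_length_filter {α : Type*} [Fintype α] [DecidableEq α] {a i : ℕ}
    (hi : i ≤ Fintype.card α) {l : List α} (hl : Fintype.card α * a ≤ l.length) :
    ∃ S : Finset α, #S = i ∧ i * a ≤ (l.filter (· ∈ S)).length := by
  have hsum : #(univ : Finset α) • a ≤ ∑ s, l.count s := by
    simpa [← length_filter_mem_eq_sum_count] using hl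
  obtain ⟨S, -, hcard, hle⟩ := exists_subset_card_eq_nsmul_le_sum hsum hi
  exact ⟨S, hcard, by simpa [length_filter_mem_eq_sum_count] using hle⟩

end Counting

section InsdelClose

variable {α : Type*}

/-- `IsInsdelClose D I x y` says that `x` can be turned into `y` by at most `D` deletions followed
by at most `I` insertions. The truncated subtractions are exact because `u` is a subsequence of
both words; the formula is the one occurring in `listDecodable`. -/
def IsInsdelClose (D I : ℕ) (x y : List α) : Prop :=
  ∃ u : List α, u.Sublist x ∧ u.Sublist y ∧ x.length - u.length ≤ D ∧ y.length - u.length ≤ I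

lemma IsInsdelClose.refl (x : List α) : IsInsdelClose 0 0 x x :=
  ⟨x, List.Sublist.refl x, List.Sublist.refl x, by simp, by simp⟩

lemma IsInsdelClose.append {D D' I I' : ℕ} {x x' y y' : List α} (h : IsInsdelClose D I x y)
    (h' : IsInsdelClose D' I' x' y') : IsInsdelClose (D + D') (I + I') (x ++ x') (y ++ y') := by
  obtain ⟨u, hux, huy, hD, hI⟩ := h
  obtain ⟨u', hux', huy', hD', hI'⟩ := h'
  refine ⟨u ++ u', hux.append hux', huy.append huy', ?_, ?_⟩ <;>
    · simp only [List.length_append]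
      lia

lemma IsInsdelClose.mono {D D' I I' : ℕ} {x y : List α} (h : IsInsdelClose D I x y)
    (hD : D ≤ D') (hI : I ≤ I') : IsInsdelClose D' I' x y := by
  obtain ⟨u, hux, huy, hxD, hyI⟩ := h
  exact ⟨u, hux, huy, hxD.trans hD, hyI.trans hI⟩

lemma card_le_mul_card_of_listDecodable {C Y : Finset (List α)} {D I : ℕ} {L : ℝ}
    (hC : listDecodable C D I L) (hY : ∀ x ∈ C, ∃ y ∈ Y, IsInsdelClose D I x y) :
    (#C : ℝ) ≤ #Y * L := by
  classical
  have hball (y : List α) : (#{x ∈ C | IsInsdelClose D I x y} : ℝ) ≤ L := by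
    rw [← Set.ncard_coe_finset, coe_filter]
    exact hC y
  have hcover : C ⊆ Y.biUnion fun y ↦ {x ∈ C | IsInsdelClose D I x y} := fun x hx ↦ by
    obtain ⟨y, hy, hxy⟩ := hY x hx
    exact mem_biUnion.2 ⟨y, hy, mem_filter.2 ⟨hx, hxy⟩⟩
  calc (#C : ℝ) ≤ ∑ y ∈ Y, (#{x ∈ C | IsInsdelClose D I x y} : ℝ) :=
        mod_cast (card_le_card hcover).trans card_biUnion_le
    _ ≤ #Y * L := by simpa using sum_le_card_nsmul Y _ L fun y _ ↦ hball y

end InsdelClose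

section Centers

variable {α : Type*}

lemma sublist_flatten_replicate_length {p l : List α} (h : ∀ x ∈ l, x ∈ p) :
    l.Sublist (List.replicate l.length p).flatten := by
  induction l with
  | nil => simp
  | cons x l ih =>
    rw [List.forall_mem_cons] at h
    exact (List.singleton_sublist.2 h.1).append (ih h.2)

/-- The letters of `S`, listed in an arbitrary fixed order and repeated `m` times. -/
noncomputable def cyclicWord (S : Finset α) (m : ℕ) : List α :=
  (List.replicate m S.toList).flatten

lemma length_cyclicWord (S : Finset α) (m : ℕ) : (cyclicWord S m).length = m * #S := by
  simp [cyclicWord]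

variable [Fintype α]

lemma exists_isInsdelClose_cyclicWord {a i j : ℕ} (hα : Fintype.card α = i + j) {l : List α}
    (hl : l.length = (i + j) * a) :
    ∃ S : Finset α, IsInsdelClose (j * a) (i * (i - 1) * a) l (cyclicWord S (i * a)) := by
  classical
  obtain ⟨S, hS, hfilter⟩ :=
    exists_card_eq_mul_le_length_filter (a := a) (i := i) (l := l) (by lia) (by rw [hα, hl])
  obtain ⟨u, hu, hu_length⟩ : ∃ u : List α, u.Sublist (l.filter (· ∈ S)) ∧ u.length = i * a :=
    ⟨_, List.take_sublist _ _, List.length_take_of_le hfilter⟩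
  refine ⟨S, u, hu.trans List.filter_sublist, ?_, ?_, ?_⟩
  · rw [cyclicWord, ← hu_length]
    exact sublist_flatten_replicate_length fun x hx ↦ by
      simpa using (List.mem_filter.1 (hu.mem hx)).2
  · rw [hl, hu_length, add_mul, Nat.add_sub_cancel_left]
  · rw [length_cyclicWord, hS, hu_length, ← Nat.mul_sub_one]
    exact (Nat.mul_right_comm _ _ _).le

/-- The words that begin with `r` arbitrary letters, followed by two cyclic words: one with `k * a`
periods and one with `(k + 1) * b` periods. For period sets of sizes `k` and `k + 1` these are the
centers attached to the edge of `F_q` between its `k`-th and `(k + 1)`-st vertices. -/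
noncomputable def edgeCenters (α : Type*) [Fintype α] [DecidableEq α] (r k a b : ℕ) :
    Finset (List α) :=
  univ.image fun p : List.Vector α r × Finset α × Finset α ↦
    p.1.toList ++ (cyclicWord p.2.1 (k * a) ++ cyclicWord p.2.2 ((k + 1) * b))

variable [DecidableEq α]

lemma card_edgeCenters_le (r k a b : ℕ) :
    #(edgeCenters α r k a b) ≤ Fintype.card α ^ r * 4 ^ Fintype.card α := by
  refine card_image_le.trans_eq ?_
  rw [card_univ, Fintype.card_prod, Fintype.card_prod, card_vector, Fintype.card_finset, ← mul_pow]
  norm_num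

lemma exists_mem_edgeCenters_isInsdelClose {r k j a b : ℕ} (hα : Fintype.card α = k + 1 + j)
    {x : List α} (hx : x.length = r + (k + 1 + j) * (a + b)) :
    ∃ y ∈ edgeCenters α r k a b,
      IsInsdelClose ((j + 1) * a + j * b) (k * (k - 1) * a + (k + 1) * k * b) x y := by
  set w := x.take r
  set l := (x.drop r).take ((k + 1 + j) * a)
  set l' := (x.drop r).drop ((k + 1 + j) * a)
  have hxw : w ++ (l ++ l') = x := by rw [List.take_append_drop, List.take_append_drop]
  have hw : w.length = r := by grind
  have hl : l.length = (k + (j + 1)) * a := by grind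
  have hl' : l'.length = (k + 1 + j) * b := by grind
  obtain ⟨S, hS⟩ := exists_isInsdelClose_cyclicWord (by lia) hl
  obtain ⟨T, hT⟩ := exists_isInsdelClose_cyclicWord hα hl'
  refine ⟨_, mem_image_of_mem _ (mem_univ (⟨w, hw⟩, S, T)), ?_⟩
  have hclose := (IsInsdelClose.refl w).append (hS.append hT)
  rw [hxw] at hclose
  simpa using hclose

end Centers

section Budget

-- The edge is the one crossed by the horizontal line at height `δ`; the hypothesis at `z = k` puts
-- `(γ, δ)` on the far side of the line through that edge.
lemma exists_edge_le {q : ℕ} (hq : 0 < q) {γ δ : ℝ} (hγ : 0 ≤ γ) (hδ : 0 ≤ δ)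
    (h : ∀ z : ℕ, 1 ≤ z → z ≤ q - 1 →
      ((2 * (q : ℝ) - 1) * z - (z : ℝ) ^ 2) / q ≤ γ + 2 * z * δ) :
    ∃ k j : ℕ, ∃ t : ℝ, q = k + 1 + j ∧ 0 ≤ t ∧ t ≤ 1 ∧ t * (j + 1) + (1 - t) * j ≤ q * δ ∧
      t * (k * (k - 1) : ℕ) + (1 - t) * ((k + 1) * k : ℕ) ≤ q * γ := by
  have hq' : (0 : ℝ) < q := by exact_mod_cast hq
  rcases le_or_gt ((q : ℝ) - 1) (q * δ) with hlarge | hsmall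
  · refine ⟨0, q - 1, 0, by lia, le_rfl, zero_le_one, ?_, ?_⟩
    · simpa [Nat.cast_pred hq] using hlarge
    · simpa using mul_nonneg hq'.le hγ
  · have hfloor : (⌊(q : ℝ) * δ⌋₊ : ℝ) ≤ q * δ := Nat.floor_le (by positivity)
    have hfloor' : (q : ℝ) * δ < ⌊(q : ℝ) * δ⌋₊ + 1 := Nat.lt_floor_add_one _
    set j := ⌊(q : ℝ) * δ⌋₊
    have hjq : j + 1 < q := by
      have : (j : ℝ) + 1 < q := by linarith
      exact_mod_cast this
    obtain ⟨k, hk, hkq⟩ : ∃ k, 1 ≤ k ∧ q = k + 1 + j := ⟨q - 1 - j, by lia, by lia⟩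
    have hkq' : (q : ℝ) = k + 1 + j := by exact_mod_cast hkq
    have hline := h k hk (by lia)
    rw [div_le_iff₀ hq'] at hline
    refine ⟨k, j, q * δ - j, hkq, by linarith, by linarith, by linarith, ?_⟩
    push_cast [Nat.cast_pred hk]
    calc (q * δ - j) * (k * (k - 1)) + (1 - (q * δ - j)) * ((k + 1) * k)
        = (2 * (q : ℝ) - 1) * k - k ^ 2 - q * (2 * k * δ) := by rw [hkq']; ring
      _ ≤ q * γ := by linarith

-- Rounding `t * N` up to `a` overshoots the deletion count by less than one, which the ceiling
-- absorbs, and does not increase the insertion count because `m ≤ m'`.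
lemma exists_add_eq_mul_add_mul_le_ceil (N j : ℕ) {m m' : ℕ} (hm : m ≤ m') {t X Y : ℝ}
    (ht₀ : 0 ≤ t) (ht₁ : t ≤ 1) (hX : N * (t * (j + 1) + (1 - t) * j) ≤ X)
    (hY : N * (t * m + (1 - t) * m') ≤ Y) :
    ∃ a b : ℕ, a + b = N ∧ (j + 1) * a + j * b ≤ ⌈X⌉₊ ∧ m * a + m' * b ≤ ⌈Y⌉₊ := by
  have haN : ⌈t * N⌉₊ ≤ N := Nat.ceil_le.2 (mul_le_of_le_one_left N.cast_nonneg ht₁)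
  obtain ⟨b, hb⟩ := Nat.exists_eq_add_of_le haN
  have ha : t * N ≤ ⌈t * N⌉₊ := Nat.le_ceil _
  refine ⟨⌈t * N⌉₊, b, hb.symm, ?_, ?_⟩
  · calc (j + 1) * ⌈t * N⌉₊ + j * b = ⌈t * N⌉₊ + j * (⌈t * N⌉₊ + b) := by ring
      _ = ⌈t * N + (j * N : ℕ)⌉₊ := by rw [← hb, Nat.ceil_add_natCast (by positivity)]
      _ ≤ ⌈X⌉₊ := Nat.ceil_mono (by push_cast; linarith)
  · have hbN : (b : ℝ) = N - ⌈t * N⌉₊ := by rw [eq_sub_iff_add_eq']; exact_mod_cast hb.symm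
    have hm' : (0 : ℝ) ≤ m' - m := sub_nonneg.2 (by exact_mod_cast hm)
    have hreal : (m : ℝ) * ⌈t * N⌉₊ + m' * b ≤ Y :=
      calc (m : ℝ) * ⌈t * N⌉₊ + m' * b = m' * N - (m' - m) * ⌈t * N⌉₊ := by rw [hbN]; ring
        _ ≤ m' * N - (m' - m) * (t * N) := by gcongr
        _ = N * (t * m + (1 - t) * m') := by ring
        _ ≤ Y := hY
    exact_mod_cast hreal.trans (Nat.le_ceil Y)

lemma exists_block_sizes_le_ceil {q : ℕ} (hq : 0 < q) {γ δ : ℝ} (hγ : 0 ≤ γ) (hδ : 0 ≤ δ)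
    (h : ∀ z : ℕ, 1 ≤ z → z ≤ q - 1 →
      ((2 * (q : ℝ) - 1) * z - (z : ℝ) ^ 2) / q ≤ γ + 2 * z * δ) (n : ℕ) :
    ∃ k j a b : ℕ, q = k + 1 + j ∧ a + b = n / q ∧ (j + 1) * a + j * b ≤ ⌈δ * n⌉₊ ∧
      k * (k - 1) * a + (k + 1) * k * b ≤ ⌈γ * n⌉₊ := by
  obtain ⟨k, j, t, hkj, ht₀, ht₁, hdel, hins⟩ := exists_edge_le hq hγ hδ h
  have hN : ((n / q : ℕ) : ℝ) * q ≤ n := by exact_mod_cast Nat.div_mul_le_self n q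
  have hscale {c v : ℝ} (hc : 0 ≤ c) (hv : v ≤ q * c) : (n / q : ℕ) * v ≤ c * n :=
    calc (n / q : ℕ) * v ≤ (n / q : ℕ) * (q * c) := by gcongr
      _ = c * ((n / q : ℕ) * q) := by ring
      _ ≤ c * n := by gcongr
  have hmono : k * (k - 1) ≤ (k + 1) * k := Nat.mul_le_mul (by lia) (by lia)
  obtain ⟨a, b, hab⟩ := exists_add_eq_mul_add_mul_le_ceil (n / q) j hmono ht₀ ht₁
    (hscale hδ hdel) (hscale hγ hins)
  exact ⟨k, j, a, b, hkj, hab⟩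

end Budget

theorem stmt4_general {α : Type*} [Fintype α] {q : ℕ} (hα : Fintype.card α = q) (hq : 0 < q)
    {γ δ : ℝ} (hγ : 0 ≤ γ) (hδ : 0 ≤ δ)
    (h : ∀ z : ℕ, 1 ≤ z → z ≤ q - 1 →
      ((2 * (q : ℝ) - 1) * z - (z : ℝ) ^ 2) / q ≤ γ + 2 * z * δ)
    {L : ℝ} {n : ℕ} {C : Finset (List α)} (hCn : ∀ x ∈ C, x.length = n)
    (hC : listDecodable C ⌈δ * n⌉₊ ⌈γ * n⌉₊ L) :
    (#C : ℝ) ≤ (q ^ q * 4 ^ q : ℕ) * L := by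
  classical
  have hL : 0 ≤ L := (Nat.cast_nonneg _).trans (hC [])
  obtain ⟨k, j, a, b, hkj, hab, hdel, hins⟩ := exists_block_sizes_le_ceil hq hγ hδ h n
  have hn : n = n % q + (k + 1 + j) * (a + b) := by rw [← hkj, hab, Nat.mod_add_div]
  have hcover : ∀ x ∈ C, ∃ y ∈ edgeCenters α (n % q) k a b,
      IsInsdelClose ⌈δ * n⌉₊ ⌈γ * n⌉₊ x y := fun x hx ↦ by
    obtain ⟨y, hy, hxy⟩ :=
      exists_mem_edgeCenters_isInsdelClose (hα.trans hkj) ((hCn x hx).trans hn)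
    exact ⟨y, hy, hxy.mono hdel hins⟩
  have hcard : #(edgeCenters α (n % q) k a b) ≤ q ^ q * 4 ^ q := by
    refine (card_edgeCenters_le _ _ _ _).trans ?_
    rw [hα]
    gcongr
    exact (Nat.mod_lt n hq).le
  calc (#C : ℝ) ≤ #(edgeCenters α (n % q) k a b) * L := card_le_mul_card_of_listDecodable hC hcover
    _ ≤ (q ^ q * 4 ^ q : ℕ) * L := by gcongr

lemma eventually_lt_rpow_mul_natCast (K : ℝ) {b R : ℝ} (hb : 1 < b) (hR : 0 < R) :
    ∀ᶠ n : ℕ in atTop, K < b ^ (R * n) :=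
  ((tendsto_rpow_atTop_of_base_gt_one b hb).comp
    (tendsto_natCast_atTop_atTop.const_mul_atTop hR)).eventually_gt_atTop K

theorem stmt4 (q : ℕ) (hq : 2 ≤ q) (γ δ : ℝ) (hγ : 0 ≤ γ) (hδ : 0 ≤ δ)
    (h : ∀ z : ℕ, 1 ≤ z → z ≤ q - 1 →
      ((2 * (q : ℝ) - 1) * z - (z : ℝ) ^ 2) / q ≤ γ + 2 * z * δ) :
    ∀ L : ℕ, 1 ≤ L → ∀ R : ℝ, 0 < R → ∃ n₀ : ℕ, ∀ n : ℕ, n₀ ≤ n →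
      ∀ C : Finset (List (Fin q)), (∀ x ∈ C, x.length = n) →
        listDecodable C ⌈δ * n⌉₊ ⌈γ * n⌉₊ (L : ℝ) →
        (C.card : ℝ) < (2 : ℝ) ^ (R * n) := by
  intro L _ R hR
  obtain ⟨n₀, hn₀⟩ := eventually_atTop.1 (eventually_lt_rpow_mul_natCast _ one_lt_two hR)
  exact ⟨n₀, fun n hn C hCn hC ↦
    (stmt4_general (Fintype.card_fin q) (by lia) hγ hδ h hCn hC).trans_lt (hn₀ n hn)⟩
end

section
/- Let ε ∈ (0,1) be a real such that s := ε⁻⁴ is an integer. There exists n₀ (depending on ε) such that for every n ≥ n₀ the following holds: for every binary string v and all reals δ, γ ≥ 0 with γ + 2δ ≤ 1 − ε, the number of integers k ≥ 0 with s^k < n for which there exists a common subsequence u of v and the Bukh–Ma codeword A_{s^k, n} satisfying n − |u| ≤ δn and |v| − |u| ≤ γn is at most 1200/ε³. (That is, the Bukh–Ma code C_{n,ε} = { A_{r,n} : r = s^k, k < log_s n } is list-decodable from δn deletions and γn insertions with list size at most 1200/ε³.) -/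
/-- The prefix of length `l` of the infinite alternating binary string `(0^r 1^r)^∞`. -/
def bukhMa (r l : ℕ) : List Bool :=
  (List.range l).map (fun t => decide ((t / r) % 2 = 1))

/-!
The argument is an energy increment. The energy of a factorization of `v` is the total of
`|w| * (mean bias of w)²` over its factors `w`; it lies between `0` and `|v|`.

Let `w` be a factor of mean bias `b`, and match it with a stretch of alternating runs of length `r`.
If a piece of `w` has length `l` and mean bias `b` towards `a`, at most `q = min r ((1 + b) l / 2)`
letters of it are matched with a run of `a`, and `3 q ≤ l + (1 + ψ b) r` for an odd function `ψ`.
Consecutive runs see the biases `b` and `-b`, so the terms `ψ` cancel: were all pieces of `w` of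
mean bias `b`, the matching would have at most about a third of the combined length of `w` and the
stretch. A codeword `A_{r,n}` that shares a longer common subsequence with `v` therefore forces the
biases of the pieces to deviate from those of their factors, and cutting `v` into the pieces raises
the energy, by the variance of the bias: by at least `ε² n / 9` in total.

Processing the codewords from the largest `r` down keeps the factorization coarse compared with the
current run length, as long as consecutive values of `r` are a factor `24 / ε` apart. Since the
energy is at most `|v| ≤ 2 n`, such a sequence of codewords has at most `18 / ε² + 1` members.
-/

namespace BukhMa

/-- The bias of `w` towards the letter `a`: the number of occurrences of `a` minus the number of
occurrences of the other letter. -/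
def bias (a : Bool) (w : List Bool) : ℝ := w.count a - w.count (!a)

theorem bias_not (a : Bool) (w : List Bool) : bias (!a) w = -bias a w := by
  simp [bias]

theorem bias_append (a : Bool) (w₁ w₂ : List Bool) :
    bias a (w₁ ++ w₂) = bias a w₁ + bias a w₂ := by
  simp only [bias, List.count_append, Nat.cast_add]
  ring

theorem bias_eq_two_mul_count_sub_length (a : Bool) (w : List Bool) :
    bias a w = 2 * w.count a - w.length := by
  rw [bias, ← List.count_not_add_count w a]
  push_cast
  ring

theorem sq_bias_eq_sq_bias (a a' : Bool) (w : List Bool) : bias a w ^ 2 = bias a' w ^ 2 := by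
  obtain rfl | rfl := Bool.eq_or_eq_not a a'
  · rfl
  · rw [bias_not, neg_sq]

theorem abs_bias_le_length (a : Bool) (w : List Bool) : |bias a w| ≤ w.length := by
  have hcount : (w.count a : ℝ) ≤ w.length := by exact_mod_cast List.count_le_length
  rw [bias_eq_two_mul_count_sub_length, abs_le]
  constructor <;> linarith

/-- The mean bias of `w` towards `a` per letter; it is `0` for the empty word. -/
noncomputable def meanBias (a : Bool) (w : List Bool) : ℝ := bias a w / w.length

theorem abs_meanBias_le_one (a : Bool) (w : List Bool) : |meanBias a w| ≤ 1 := by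
  rw [meanBias, abs_div, Nat.abs_cast]
  exact div_le_one_of_le₀ (abs_bias_le_length a w) (Nat.cast_nonneg _)

/-- The energy of a word, its length times the square of its mean bias. The letter `true` stands
for either letter, by `sq_bias_eq_sq_bias`. -/
noncomputable def wordEnergy (w : List Bool) : ℝ := bias true w ^ 2 / w.length

theorem wordEnergy_nonneg (w : List Bool) : 0 ≤ wordEnergy w := by
  unfold wordEnergy
  positivity

theorem wordEnergy_le_length (w : List Bool) : wordEnergy w ≤ w.length := by
  refine div_le_of_le_mul₀ (Nat.cast_nonneg _) (Nat.cast_nonneg _) ?_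
  rw [← sq]
  exact sq_le_sq' (abs_le.mp (abs_bias_le_length true w)).1
    (abs_le.mp (abs_bias_le_length true w)).2

/-- The energy of a factorization, the quantity that increases along the argument. -/
noncomputable def energy (Q : List (List Bool)) : ℝ := (Q.map wordEnergy).sum

theorem energy_cons (w : List Bool) (Q : List (List Bool)) :
    energy (w :: Q) = wordEnergy w + energy Q := by
  simp [energy]

theorem energy_append (P Q : List (List Bool)) : energy (P ++ Q) = energy P + energy Q := by
  simp [energy]

theorem energy_nonneg (Q : List (List Bool)) : 0 ≤ energy Q :=
  List.sum_nonneg (by simp [wordEnergy_nonneg])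

theorem energy_le_length_flatten (Q : List (List Bool)) : energy Q ≤ Q.flatten.length := by
  induction Q with
  | nil => simp [energy]
  | cons w Q ih =>
    rw [energy_cons, List.flatten_cons, List.length_append, Nat.cast_add]
    exact add_le_add (wordEnergy_le_length w) ih

theorem two_mul_mul_abs_bias_sub_le (a : Bool) (w : List Bool) (b t : ℝ) :
    2 * t * |bias a w - b * w.length| ≤
      t ^ 2 * w.length + wordEnergy w - 2 * b * bias a w + b ^ 2 * w.length := by
  rw [wordEnergy, sq_bias_eq_sq_bias true a]
  rcases eq_or_ne w [] with rfl | hw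
  · simp [bias]
  have hlen : (0 : ℝ) < w.length := Nat.cast_pos.mpr (List.length_pos_iff.mpr hw)
  generalize (w.length : ℝ) = l at *
  have hsquare : t ^ 2 * l + bias a w ^ 2 / l - 2 * b * bias a w + b ^ 2 * l
      - 2 * t * |bias a w - b * l| = (t * l - |bias a w - b * l|) ^ 2 / l := by
    rw [sub_sq, sq_abs]
    field_simp
    ring
  rw [← sub_nonneg, hsquare]
  positivity

/-- The total deviation of the biases of the factors in `P` from the mean bias `b`. -/
def deviation (a : Bool) (b : ℝ) (P : List (List Bool)) : ℝ :=
  (P.map fun w => |bias a w - b * w.length|).sum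

theorem deviation_nonneg (a : Bool) (b : ℝ) (P : List (List Bool)) : 0 ≤ deviation a b P :=
  List.sum_nonneg (by simp)

theorem deviation_cons (a : Bool) (b : ℝ) (w : List Bool) (P : List (List Bool)) :
    deviation a b (w :: P) = |bias a w - b * w.length| + deviation a b P := by
  simp [deviation]

theorem deviation_not_neg (a : Bool) (b : ℝ) (P : List (List Bool)) :
    deviation (!a) (-b) P = deviation a b P := by
  have habs (w : List Bool) :
      |bias (!a) w - -b * w.length| = |bias a w - b * w.length| := by
    rw [bias_not, ← abs_neg]
    ring_nf
  simp only [deviation, habs]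

theorem two_mul_mul_deviation_le (a : Bool) (b t : ℝ) (P : List (List Bool)) :
    2 * t * deviation a b P ≤ t ^ 2 * P.flatten.length + energy P
      - 2 * b * bias a P.flatten + b ^ 2 * P.flatten.length := by
  induction P with
  | nil => simp [deviation, energy, bias]
  | cons w P ih =>
    rw [deviation_cons, energy_cons, List.flatten_cons, bias_append]
    push_cast [List.length_append]
    linarith [two_mul_mul_abs_bias_sub_le a w b t]

theorem two_mul_mul_deviation_meanBias_le (a : Bool) (t : ℝ) (P : List (List Bool)) :
    2 * t * deviation a (meanBias a P.flatten) P ≤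
      t ^ 2 * P.flatten.length + energy P - wordEnergy P.flatten := by
  refine (two_mul_mul_deviation_le a _ t P).trans_eq ?_
  rw [meanBias, wordEnergy, sq_bias_eq_sq_bias true a]
  rcases eq_or_ne (P.flatten.length : ℝ) 0 with hlen | hlen
  · rw [hlen]
    simp
  · field_simp
    ring

/-- The weight `ψ b` by which a run of a letter may exceed its length in the accounting of
`three_mul_le_add_excess`, when the mean bias towards that letter is `b`. Any odd function `ψ` on
`[-1, 1]` with `|ψ| ≤ 1` and `(2 - ψ b) * (1 + b) ≤ 2` would serve as well. -/
noncomputable def excess (b : ℝ) : ℝ := 2 * b / (1 + b ^ 2)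

theorem excess_neg (b : ℝ) : excess (-b) = -excess b := by
  simp [excess, neg_div]

theorem excess_le_one (b : ℝ) : excess b ≤ 1 := by
  rw [excess, div_le_one (by positivity)]
  linarith [two_mul_le_add_sq 1 b]

theorem neg_one_le_excess (b : ℝ) : -1 ≤ excess b := by
  linarith [excess_neg b, excess_le_one (-b)]

theorem two_sub_excess_mul_le {b : ℝ} (hb : b ≤ 1) : (2 - excess b) * (1 + b) ≤ 2 := by
  have hdiff : 2 - (2 - excess b) * (1 + b) = 2 * b ^ 2 * (1 - b) / (1 + b ^ 2) := by
    unfold excess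
    field_simp
    ring
  have : 0 ≤ 2 * b ^ 2 * (1 - b) / (1 + b ^ 2) :=
    div_nonneg (mul_nonneg (by positivity) (sub_nonneg.mpr hb)) (by positivity)
  linarith

theorem three_mul_le_add_excess {b l q r : ℝ} (hb : b ≤ 1) (hl : 0 ≤ l) (hqr : q ≤ r)
    (hql : q ≤ (1 + b) / 2 * l) : 3 * q ≤ l + (1 + excess b) * r :=
  calc 3 * q = (1 + excess b) * q + (2 - excess b) * q := by ring
    _ ≤ (1 + excess b) * r + (2 - excess b) * ((1 + b) / 2 * l) := by
      gcongr
      · linarith [neg_one_le_excess b]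
      · linarith [excess_le_one b]
    _ = (1 + excess b) * r + (2 - excess b) * (1 + b) / 2 * l := by ring
    _ ≤ (1 + excess b) * r + 1 * l := by
      gcongr
      linarith [two_sub_excess_mul_le hb]
    _ = l + (1 + excess b) * r := by ring

theorem three_mul_length_le_of_sublist_replicate {r : ℕ} {a : Bool} {u w : List Bool} {b : ℝ}
    (hb : b ≤ 1) (huw : u.Sublist w) (hur : u.Sublist (List.replicate r a)) :
    3 * (u.length : ℝ) ≤
      w.length + (1 + excess b) * r + 3 / 2 * |bias a w - b * w.length| := by
  obtain ⟨m, hmr, rfl⟩ := List.sublist_replicate_iff.mp hur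
  have hmr' : (m : ℝ) ≤ r := by exact_mod_cast hmr
  have hcount : (m : ℝ) ≤ w.count a := by
    exact_mod_cast List.replicate_sublist_iff.mp huw
  have hbias := bias_eq_two_mul_count_sub_length a w
  have hle := le_abs_self (bias a w - b * w.length)
  have hnonneg := abs_nonneg (bias a w - b * w.length)
  have := three_mul_le_add_excess (q := m - |bias a w - b * w.length| / 2) (r := r) hb
    (Nat.cast_nonneg w.length) (by linarith) (by linarith)
  rw [List.length_replicate]
  linarith

/-- The word made of `k` runs of length `r`, the letters alternating from `a` on. -/
def alternatingRuns (r : ℕ) : Bool → ℕ → List Bool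
  | _, 0 => []
  | a, k + 1 => List.replicate r a ++ alternatingRuns r (!a) k

-- The excesses of consecutive runs cancel, which leaves the excess of at most one run.
theorem exists_factorization_of_sublist_alternatingRuns {r k : ℕ} {a : Bool} {u w : List Bool}
    {b : ℝ} (hb : |b| ≤ 1) (huw : u.Sublist w) (hur : u.Sublist (alternatingRuns r a k)) :
    ∃ P : List (List Bool), P.flatten = w ∧ P.length = k + 1 ∧
      3 * (u.length : ℝ) ≤
        w.length + k * r + max 0 (excess b) * r + 3 / 2 * deviation a b P := by
  induction k generalizing a b u w with
  | zero =>
    obtain rfl : u = [] := List.sublist_nil.mp hur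
    refine ⟨[w], by simp, rfl, ?_⟩
    have := deviation_nonneg a b [w]
    simp only [List.length_nil, Nat.cast_zero, mul_zero]
    positivity
  | succ k ih =>
    obtain ⟨u₁, u₂, rfl, hur₁, hur₂⟩ := List.sublist_append_iff.mp hur
    obtain ⟨w₁, w₂, rfl, huw₁, huw₂⟩ := List.append_sublist_iff.mp huw
    obtain ⟨P, rfl, hPlen, hP⟩ := ih (b := -b) (by rwa [abs_neg]) huw₂ hur₂
    refine ⟨w₁ :: P, rfl, by rw [List.length_cons, hPlen], ?_⟩
    have hfirst := three_mul_length_le_of_sublist_replicate (le_of_abs_le hb) huw₁ hur₁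
    have hmax : max 0 (excess b) = excess b + max 0 (-excess b) := by
      rw [← max_add_add_left, add_zero, add_neg_cancel, max_comm]
    rw [excess_neg, deviation_not_neg] at hP
    rw [hmax, deviation_cons]
    push_cast [List.length_append]
    linarith

theorem exists_factorization_of_sublist {r k : ℕ} {a : Bool} {u w y : List Bool} {t : ℝ}
    (ht : 0 ≤ t) (huw : u.Sublist w) (huy : u.Sublist y) (hy : y.Sublist (alternatingRuns r a k))
    (hk : k * r ≤ y.length + 2 * r) :
    ∃ P : List (List Bool), P.flatten = w ∧ P.length * r ≤ y.length + 3 * r ∧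
      4 * t * (3 * u.length - w.length - y.length - 3 * r) ≤
        3 * (t ^ 2 * w.length + energy P - wordEnergy w) := by
  obtain ⟨P, rfl, hPlen, hP⟩ := exists_factorization_of_sublist_alternatingRuns
    (abs_meanBias_le_one a w) huw (huy.trans hy)
  refine ⟨P, rfl, by rw [hPlen]; linarith, ?_⟩
  have hk' : (k : ℝ) * r ≤ y.length + 2 * r := by exact_mod_cast hk
  have hmax : max 0 (excess (meanBias a P.flatten)) * r ≤ 1 * (r : ℝ) := by
    gcongr
    exact max_le zero_le_one (excess_le_one _)
  calc 4 * t * (3 * u.length - P.flatten.length - y.length - 3 * r)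
      ≤ 4 * t * (3 / 2 * deviation a (meanBias a P.flatten) P) := by
        gcongr
        linarith
    _ = 3 * (2 * t * deviation a (meanBias a P.flatten) P) := by ring
    _ ≤ _ := by
        gcongr
        exact two_mul_mul_deviation_meanBias_le a t P

/-- `x` has runs of length about `r`: each factor of `x` embeds into alternating runs of length `r`
whose total length exceeds that of the factor by at most `2 * r`. -/
def IsAlternating (r : ℕ) (x : List Bool) : Prop :=
  ∀ y, y <:+: x → ∃ a k, y.Sublist (alternatingRuns r a k) ∧ k * r ≤ y.length + 2 * r

theorem IsAlternating.of_infix {r : ℕ} {x y : List Bool} (hx : IsAlternating r x)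
    (hyx : y <:+: x) : IsAlternating r y :=
  fun z hzy => hx z (hzy.trans hyx)

theorem map_range'_mul_eq_alternatingRuns (r q k : ℕ) :
    (List.range' (q * r) (k * r)).map (fun t => decide ((t / r) % 2 = 1)) =
      alternatingRuns r (decide (q % 2 = 1)) k := by
  induction k generalizing q with
  | zero => simp [alternatingRuns]
  | succ k ih =>
    have hnot : (!decide (q % 2 = 1)) = decide ((q + 1) % 2 = 1) := by
      rw [← decide_not, decide_eq_decide]
      omega
    rw [add_one_mul k r, add_comm (k * r), ← List.range'_append_1, List.map_append,
      ← add_one_mul q r, ih, alternatingRuns, hnot]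
    congr 1
    rw [List.eq_replicate_iff]
    refine ⟨by simp, fun c hc => ?_⟩
    obtain ⟨t, ht, rfl⟩ := List.mem_map.mp hc
    obtain ⟨hqt, htq⟩ := List.mem_range'_1.mp ht
    rw [Nat.div_eq_of_lt_le hqt (by rwa [add_one_mul])]

theorem isAlternating_bukhMa {r : ℕ} (hr : 0 < r) (n : ℕ) : IsAlternating r (bukhMa r n) := by
  rintro y ⟨x₁, x₂, hy⟩
  set o := x₁.length
  set l := y.length
  have hy_eq : y = (List.range' o l).map (fun t => decide ((t / r) % 2 = 1)) := by
    have hn : n = o + (l + x₂.length) := by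
      simpa [bukhMa, add_assoc] using (congrArg List.length hy).symm
    rw [bukhMa, hn, List.range_eq_range', ← List.range'_append_1, ← List.range'_append_1,
      List.map_append, List.map_append, List.append_assoc, zero_add] at hy
    have hsuffix := (List.append_inj hy (by simp [o])).2
    exact (List.append_inj hsuffix (by simp [l])).1
  refine ⟨decide (o / r % 2 = 1), l / r + 2, ?_, ?_⟩
  · rw [hy_eq, ← map_range'_mul_eq_alternatingRuns]
    refine List.Sublist.map _ ?_
    have hsuffix : (List.range' o l).Sublist (List.range' (o / r * r) (o % r + l)) := by
      rw [← List.range'_append_1, Nat.div_add_mod']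
      exact List.sublist_append_right _ _
    refine hsuffix.trans (List.range'_sublist_right.mpr ?_)
    linarith [Nat.mod_lt o hr, Nat.mod_lt l hr, Nat.div_add_mod' l r]
  · rw [add_mul]
    gcongr
    exact Nat.div_mul_le_self l r

theorem exists_refinement_of_sublist {r : ℕ} {t : ℝ} (ht : 0 ≤ t) {Q : List (List Bool)}
    {u x : List Bool} (hx : IsAlternating r x) (huQ : u.Sublist Q.flatten) (hux : u.Sublist x) :
    ∃ Q' : List (List Bool), Q'.flatten = Q.flatten ∧
      Q'.length * r ≤ x.length + 3 * r * Q.length ∧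
      4 * t * (3 * u.length - Q.flatten.length - x.length - 3 * r * Q.length) ≤
        3 * (t ^ 2 * Q.flatten.length + energy Q' - energy Q) := by
  induction Q generalizing u x with
  | nil =>
    obtain rfl : u = [] := List.sublist_nil.mp huQ
    refine ⟨[], rfl, by simp, ?_⟩
    have : 0 ≤ 4 * t * x.length := by positivity
    simpa using this
  | cons w Q ih =>
    obtain ⟨u₁, u₂, rfl, huw, huQ'⟩ := List.sublist_append_iff.mp huQ
    obtain ⟨x₁, x₂, rfl, hux₁, hux₂⟩ := List.append_sublist_iff.mp hux
    obtain ⟨a, k, hruns, hk⟩ := hx x₁ (List.prefix_append x₁ x₂).isInfix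
    obtain ⟨P, rfl, hPlen, hP⟩ := exists_factorization_of_sublist ht huw hux₁ hruns hk
    obtain ⟨Q', hQ'Q, hQ'len, hQ'⟩ :=
      ih (hx.of_infix (List.suffix_append x₁ x₂).isInfix) huQ' hux₂
    refine ⟨P ++ Q', by simp [hQ'Q], ?_, ?_⟩
    · simp only [List.length_append, List.length_cons]
      linarith
    · rw [energy_append, energy_cons]
      push_cast [List.length_append, List.flatten_cons, List.length_cons]
      linarith

/-- `v` and `x` have a common subsequence that is longer than a third of their combined length by
at least `ε * |x| / 3`. -/
def HasLongCommonSubseq (ε : ℝ) (v x : List Bool) : Prop :=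
  ∃ u : List Bool, u.Sublist v ∧ u.Sublist x ∧
    (v.length : ℝ) + (1 + ε) * x.length ≤ 3 * u.length

theorem HasLongCommonSubseq.length_le {ε : ℝ} (hε : 0 ≤ ε) {v x : List Bool}
    (hvx : HasLongCommonSubseq ε v x) : (v.length : ℝ) ≤ 2 * x.length := by
  obtain ⟨u, -, hux, hu⟩ := hvx
  have hux_len : (u.length : ℝ) ≤ x.length := by exact_mod_cast hux.length_le
  have : 0 ≤ ε * (x.length : ℝ) := by positivity
  linarith

theorem hasLongCommonSubseq_of_sublist {ε δ γ : ℝ} (hδγ : γ + 2 * δ ≤ 1 - ε) {u v x : List Bool}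
    (huv : u.Sublist v) (hux : u.Sublist x) (hδ : (x.length : ℝ) - u.length ≤ δ * x.length)
    (hγ : (v.length : ℝ) - u.length ≤ γ * x.length) : HasLongCommonSubseq ε v x := by
  have := mul_le_mul_of_nonneg_right hδγ (Nat.cast_nonneg (α := ℝ) x.length)
  exact ⟨u, huv, hux, by linarith⟩

theorem exists_refinement_energy_add_le {ε : ℝ} (hε : 0 ≤ ε) {r : ℕ} {x : List Bool}
    (hx : IsAlternating r x) {Q : List (List Bool)} (hvx : HasLongCommonSubseq ε Q.flatten x)
    (hQ : 12 * (Q.length * r : ℝ) ≤ ε * x.length) :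
    ∃ Q' : List (List Bool), Q'.flatten = Q.flatten ∧ Q'.length * r ≤ 2 * x.length ∧
      energy Q + ε ^ 2 * x.length / 9 ≤ energy Q' := by
  have hv_len := hvx.length_le hε
  obtain ⟨u, huv, hux, hu⟩ := hvx
  obtain ⟨Q', hQ'Q, hQ'len, hQ'⟩ :=
    exists_refinement_of_sublist (div_nonneg hε zero_le_three) hx huv hux
  have huv_len : (u.length : ℝ) ≤ Q.flatten.length := by exact_mod_cast huv.length_le
  have hQ'len' : (Q'.length * r : ℝ) ≤ x.length + 3 * r * Q.length := by exact_mod_cast hQ'len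
  refine ⟨Q', hQ'Q, ?_, ?_⟩
  · have : (Q'.length * r : ℝ) ≤ 2 * x.length := by linarith
    exact_mod_cast this
  · have hsq_len : (ε / 3) ^ 2 * (Q.flatten.length : ℝ) ≤ (ε / 3) ^ 2 * (2 * x.length) := by
      gcongr
    have hgain : 4 * (ε / 3) * (3 / 4 * (ε * x.length)) ≤
        4 * (ε / 3) * (3 * u.length - Q.flatten.length - x.length - 3 * r * Q.length) := by
      gcongr
      linarith
    linarith

theorem exists_factorization_mul_le_energy {ε : ℝ} (hε : 0 ≤ ε) {n N : ℕ} {v : List Bool}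
    {r : ℕ → ℕ} {x : ℕ → List Bool} (hr_zero : r 0 ≤ n)
    (hr : ∀ i < N, 24 * (r (i + 1) : ℝ) ≤ ε * r i) (hx : ∀ i < N, IsAlternating (r (i + 1)) (x i))
    (hx_len : ∀ i < N, (x i).length = n) (hvx : ∀ i < N, HasLongCommonSubseq ε v (x i)) :
    ∃ Q : List (List Bool), Q.flatten = v ∧ Q.length * r N ≤ 2 * n ∧
      N * (ε ^ 2 * n / 9) ≤ energy Q := by
  induction N with
  | zero =>
    exact ⟨[v], by simp, by rw [List.length_singleton]; omega, by simpa using energy_nonneg [v]⟩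
  | succ N ih =>
    obtain ⟨Q, rfl, hQlen, hQ⟩ := ih (fun i hi => hr i (by omega)) (fun i hi => hx i (by omega))
      (fun i hi => hx_len i (by omega)) (fun i hi => hvx i (by omega))
    have hQlen' : (Q.length * r N : ℝ) ≤ 2 * n := by exact_mod_cast hQlen
    have hcoarse : 12 * (Q.length * r (N + 1) : ℝ) ≤ ε * (x N).length :=
      calc 12 * (Q.length * r (N + 1) : ℝ) = Q.length * (24 * r (N + 1)) / 2 := by ring
        _ ≤ Q.length * (ε * r N) / 2 := by
          gcongr ?_ * ?_ / 2
          exact hr N N.lt_succ_self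
        _ = ε * (Q.length * r N) / 2 := by ring
        _ ≤ ε * (2 * n) / 2 := by gcongr
        _ = ε * (x N).length := by rw [hx_len N N.lt_succ_self]; ring
    obtain ⟨Q', hQ'Q, hQ'len, hQ'⟩ := exists_refinement_energy_add_le hε
      (hx N N.lt_succ_self) (hvx N N.lt_succ_self) hcoarse
    rw [hx_len N N.lt_succ_self] at hQ'len hQ'
    refine ⟨Q', hQ'Q, hQ'len, ?_⟩
    push_cast
    linarith

theorem le_of_hasLongCommonSubseq {ε : ℝ} (hε : 0 < ε) {n N : ℕ} (hn : 0 < n) {v : List Bool}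
    {r : ℕ → ℕ} {x : ℕ → List Bool} (hr_zero : r 0 ≤ n)
    (hr : ∀ i < N, 24 * (r (i + 1) : ℝ) ≤ ε * r i) (hx : ∀ i < N, IsAlternating (r (i + 1)) (x i))
    (hx_len : ∀ i < N, (x i).length = n) (hvx : ∀ i < N, HasLongCommonSubseq ε v (x i)) :
    (N : ℝ) ≤ 18 / ε ^ 2 := by
  obtain rfl | hN := N.eq_zero_or_pos
  · rw [Nat.cast_zero]
    positivity
  obtain ⟨Q, rfl, -, hQ⟩ := exists_factorization_mul_le_energy hε.le hr_zero hr hx hx_len hvx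
  have hv_len := (hvx 0 hN).length_le hε.le
  rw [hx_len 0 hN] at hv_len
  rw [le_div_iff₀ (by positivity)]
  refine le_of_mul_le_mul_right ?_ (Nat.cast_pos (α := ℝ).mpr hn)
  linarith [energy_le_length_flatten Q]

theorem exists_seq_mem_add_le_of_mul_lt_card {g N : ℕ} {K : Finset ℕ} (hK : g * N < K.card) :
    ∃ k : ℕ → ℕ, (∀ i ≤ N, k i ∈ K) ∧ ∀ i < N, k (i + 1) + g ≤ k i := by
  induction N generalizing K with
  | zero =>
    obtain ⟨m, hm⟩ := Finset.card_pos.mp (Nat.zero_lt_of_lt hK)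
    exact ⟨fun _ => m, by simp [hm], by simp⟩
  | succ N ih =>
    have hne : K.Nonempty := Finset.card_pos.mp (Nat.zero_lt_of_lt hK)
    set m := K.max' hne
    have hsub : K ⊆ K.filter (· + g ≤ m) ∪ Finset.Ico (m + 1 - g) (m + 1) := by
      intro k hk
      have := K.le_max' k hk
      simp only [Finset.mem_union, Finset.mem_filter, Finset.mem_Ico, hk, true_and]
      omega
    have hcard := (Finset.card_le_card hsub).trans (Finset.card_union_le _ _)
    rw [Nat.card_Ico] at hcard
    obtain ⟨k, hkK, hk⟩ := ih (K := K.filter (· + g ≤ m)) (by rw [mul_add_one] at hK; omega)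
    refine ⟨fun i => Nat.casesOn i m k, ?_, ?_⟩
    · rintro (_ | i) hi
      · exact K.max'_mem hne
      · exact (Finset.mem_filter.mp (hkK i (by omega))).1
    · rintro (_ | i) hi
      · exact (Finset.mem_filter.mp (hkK 0 (by omega))).2
      · exact hk i (by omega)

theorem card_le_of_hasLongCommonSubseq {ε : ℝ} (hε : 0 < ε) {s g : ℕ} (hs : 0 < s)
    (hg : 24 ≤ ε * s ^ g) {n : ℕ} {v : List Bool} {K : Finset ℕ}
    (hK : ∀ k ∈ K, s ^ k ≤ n ∧ HasLongCommonSubseq ε v (bukhMa (s ^ k) n)) :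
    (K.card : ℝ) ≤ g * (18 / ε ^ 2 + 1) := by
  by_contra! hcard
  set N := ⌊18 / ε ^ 2⌋₊ + 1
  have hN : (N : ℝ) ≤ 18 / ε ^ 2 + 1 := by
    push_cast [N]
    gcongr
    exact Nat.floor_le (by positivity)
  have hgN : g * N < K.card := by
    have : (g * N : ℝ) < K.card := (mul_le_mul_of_nonneg_left hN g.cast_nonneg).trans_lt hcard
    exact_mod_cast this
  obtain ⟨k, hkK, hk⟩ := exists_seq_mem_add_le_of_mul_lt_card hgN
  have hgap (i : ℕ) (hi : i < N) : 24 * ((s ^ k (i + 1) : ℕ) : ℝ) ≤ ε * (s ^ k i : ℕ) :=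
    calc 24 * ((s ^ k (i + 1) : ℕ) : ℝ) ≤ ε * s ^ g * s ^ k (i + 1) := by push_cast; gcongr
      _ = ε * s ^ (k (i + 1) + g) := by ring
      _ ≤ ε * s ^ k i := by
        gcongr
        · exact_mod_cast hs
        · exact hk i hi
      _ = ε * (s ^ k i : ℕ) := by push_cast; rfl
  have hle : (N : ℝ) ≤ 18 / ε ^ 2 :=
    le_of_hasLongCommonSubseq (r := fun i => s ^ k i) (x := fun i => bukhMa (s ^ k (i + 1)) n) hε
      ((pow_pos hs _).trans_le (hK _ (hkK 0 N.zero_le)).1) (hK _ (hkK 0 N.zero_le)).1 hgap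
      (fun i _ => isAlternating_bukhMa (pow_pos hs _) n)
      (fun i _ => by simp [bukhMa]) (fun i hi => (hK _ (hkK (i + 1) hi)).2)
  have hlt : 18 / ε ^ 2 < N := by
    push_cast [N]
    exact Nat.lt_floor_add_one _
  exact hlt.not_ge hle

theorem one_lt_of_eq_one_div_pow {ε s : ℝ} {m : ℕ} (hm : m ≠ 0) (hε : ε ∈ Set.Ioo (0 : ℝ) 1)
    (hs : s = 1 / ε ^ m) : 1 < s := by
  rw [hs, one_lt_div (pow_pos hε.1 m)]
  exact pow_lt_one₀ hε.1.le hε.2 hm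

theorem one_le_mul_of_eq_one_div_pow {ε s : ℝ} {m : ℕ} (hm : m ≠ 0) (hε : ε ∈ Set.Ioc (0 : ℝ) 1)
    (hs : s = 1 / ε ^ m) : 1 ≤ ε * s := by
  rw [hs, mul_one_div, one_le_div (pow_pos hε.1 m)]
  exact pow_le_of_le_one hε.1.le hε.2 hm

theorem twenty_four_le_mul_pow_six {ε : ℝ} {s : ℕ} (hε : 1 ≤ ε * s) (hs : 1 < s) :
    24 ≤ ε * s ^ 6 :=
  have hs' : (2 : ℝ) ≤ s := by exact_mod_cast hs
  calc (24 : ℝ) ≤ 1 * 2 ^ 5 := by norm_num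
    _ ≤ ε * s * s ^ 5 := by gcongr
    _ = ε * s ^ 6 := by ring

theorem six_mul_add_one_le_div_pow {ε : ℝ} (hε : ε ∈ Set.Ioc (0 : ℝ) 1) :
    6 * (18 / ε ^ 2 + 1) ≤ 1200 / ε ^ 3 := by
  obtain ⟨hε_pos, hε_le⟩ := hε
  have h_one : 1 ≤ 1 / ε ^ 3 := (one_le_div (by positivity)).mpr (pow_le_one₀ hε_pos.le hε_le)
  calc 6 * (18 / ε ^ 2 + 1) ≤ 6 * (18 / ε ^ 3 + 1 / ε ^ 3) := by
        gcongr 6 * (18 / ?_ + ?_)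
        exact pow_le_pow_of_le_one hε_pos.le hε_le (by norm_num)
    _ = 114 / ε ^ 3 := by ring
    _ ≤ 1200 / ε ^ 3 := by gcongr; norm_num

end BukhMa

theorem stmt5_general {ε : ℝ} (hε : 0 < ε) {s g : ℕ} (hs : 1 < s) (hg : 24 ≤ ε * s ^ g) (n : ℕ)
    (v : List Bool) {δ γ : ℝ} (hδγ : γ + 2 * δ ≤ 1 - ε) :
    (({k : ℕ | s ^ k < n ∧ ∃ u : List Bool, u.Sublist v ∧ u.Sublist (bukhMa (s ^ k) n) ∧
        (n : ℝ) - u.length ≤ δ * n ∧ (v.length : ℝ) - u.length ≤ γ * n} : Set ℕ).ncard : ℝ)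
      ≤ g * (18 / ε ^ 2 + 1) := by
  set K := {k : ℕ | _}
  have hfin : K.Finite :=
    (Set.finite_Iio n).subset fun k hk => (Nat.lt_pow_self hs).trans hk.1
  rw [Set.ncard_eq_toFinset_card K hfin]
  refine BukhMa.card_le_of_hasLongCommonSubseq (v := v) (n := n) hε (by omega) hg fun k hk => ?_
  obtain ⟨hkn, u, huv, hux, hδ, hγ⟩ := hfin.mem_toFinset.mp hk
  have hlen : (bukhMa (s ^ k) n).length = n := by simp [bukhMa]
  exact ⟨hkn.le, BukhMa.hasLongCommonSubseq_of_sublist hδγ huv hux (by rwa [hlen]) (by rwa [hlen])⟩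

theorem stmt5 (ε : ℝ) (hε : ε ∈ Set.Ioo (0 : ℝ) 1) (s : ℕ) (hs : (s : ℝ) = 1 / ε ^ 4) :
    ∃ n₀ : ℕ, ∀ n : ℕ, n₀ ≤ n →
      ∀ v : List Bool, ∀ δ γ : ℝ, 0 ≤ δ → 0 ≤ γ → γ + 2 * δ ≤ 1 - ε →
        (({k : ℕ | s ^ k < n ∧ ∃ u : List Bool, u.Sublist v ∧ u.Sublist (bukhMa (s ^ k) n) ∧
            (n : ℝ) - u.length ≤ δ * n ∧ (v.length : ℝ) - u.length ≤ γ * n} : Set ℕ).ncard : ℝ)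
          ≤ 1200 / ε ^ 3 := by
  have hε' : ε ∈ Set.Ioc (0 : ℝ) 1 := Set.Ioo_subset_Ioc_self hε
  have hs_one : 1 < s := by exact_mod_cast BukhMa.one_lt_of_eq_one_div_pow four_ne_zero hε hs
  have hεs : 1 ≤ ε * s := BukhMa.one_le_mul_of_eq_one_div_pow four_ne_zero hε' hs
  exact ⟨0, fun n _ v _ _ _ _ hδγ =>
    (stmt5_general hε.1 hs_one (BukhMa.twenty_four_le_mul_pow_six hεs hs_one) n v hδγ).trans
      (by exact_mod_cast BukhMa.six_mul_add_one_le_div_pow hε')⟩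
end

section
/- There is an absolute constant c > 0 such that the following holds. Let q ≥ 2 be an integer and let ε ∈ (0,1) be a real such that s := ε⁻⁴ is an integer. There exists n₀ (depending on ε and q) such that for every n ≥ n₀ the following holds: for every string v over Fin q, every integer z with 1 ≤ z ≤ q−1, and all reals δ, γ ≥ 0 with γ + 2zδ ≤ (1−ε)·((2q−1)z − z²)/q, the number of integers k ≥ 0 with s^k < n for which there exists a common subsequence u of v and the q-ary Bukh–Ma codeword A^q_{s^k, n} satisfying n − |u| ≤ δn and |v| − |u| ≤ γn is at most c·q⁵/ε². -/
/-- The prefix of length `l` of the infinite `q`-ary string `(1^r 2^r ⋯ q^r)^∞`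
(realized over `Fin q`). -/
def bukhMaQ (q r l : ℕ) : List (Fin q) :=
  if h : 0 < q then (List.range l).map (fun t => ⟨(t / r) % q, Nat.mod_lt _ h⟩) else []

/-!
The argument is an energy decrement. Replace the indicator of each letter in `v` by its averages
over blocks of length `s ^ j`. The total squared `ℓ²` norm of these averages lies in `[0, |v|]` and
decreases in `j`. Let `u` be a common subsequence of `v` and the codeword with runs of length
`r = s ^ k`. Cut `v` into the windows in which `u` matches the successive runs. If the letter
densities of `v` are essentially the same at scales `s ^ (k - m)` and `s ^ (k + m)`, then over one
period of the codeword all `q` windows see the same densities `p a`, with `∑ p a ≤ 1`, and a run of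
the letter `a` needs a window of length about `r / p a`. Minimizing over the densities gives
`(2 * z + 1) * |u| - |v| ≲ n * z * (z + 1) / q`, while the assumption on `δ` and `γ` says that the
left side exceeds the right side by `n * z * ε`. So each such `k` costs energy
`≳ (ε / q) ^ 2 * |v|` between the two scales. Every scale is used at most `2 * m` times, whence the
bound `O(m * q ^ 2 / ε ^ 2)` on the number of `k`.
-/

open Finset

section BlockAverages

variable {L L' N : ℕ} {f : ℕ → ℝ}

/-- The average of `f` over the interval `[L * b, L * (b + 1))` that contains `x`: the conditional
expectation of `f` on the blocks of length `L`. -/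
noncomputable def blockAvg (L : ℕ) (f : ℕ → ℝ) (x : ℕ) : ℝ :=
  (∑ i ∈ range L, f (L * (x / L) + i)) / L

lemma blockAvg_congr {x y : ℕ} (h : x / L = y / L) : blockAvg L f x = blockAvg L f y := by
  simp only [blockAvg, h]

lemma blockAvg_nonneg (hf : ∀ x, 0 ≤ f x) (x : ℕ) : 0 ≤ blockAvg L f x :=
  div_nonneg (sum_nonneg fun _ _ => hf _) (Nat.cast_nonneg _)

lemma blockAvg_le_one (hf : ∀ x, f x ≤ 1) (x : ℕ) : blockAvg L f x ≤ 1 := by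
  refine div_le_one_of_le₀ ?_ (Nat.cast_nonneg _)
  simpa using sum_le_card_nsmul (range L) (fun i => f (L * (x / L) + i)) 1 fun _ _ => hf _

lemma blockAvg_sum {ι : Type*} (S : Finset ι) (g : ι → ℕ → ℝ) (x : ℕ) :
    blockAvg L (fun y => ∑ a ∈ S, g a y) x = ∑ a ∈ S, blockAvg L (g a) x := by
  simp only [blockAvg, ← sum_div]
  rw [sum_comm]

lemma sum_mul_blockAvg {h : ℕ → ℝ} (hN : L ∣ N) (hh : ∀ x y, x / L = y / L → h x = h y) :
    ∑ x ∈ range N, h x * blockAvg L f x = ∑ x ∈ range N, h x * f x := by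
  rcases L.eq_zero_or_pos with rfl | hL
  · simp [Nat.eq_zero_of_zero_dvd hN]
  obtain ⟨M, rfl⟩ := hN
  induction M with
  | zero => simp
  | succ M ih =>
    have hdiv {i : ℕ} (hi : i ∈ range L) : (L * M + i) / L = M := by
      rw [Nat.mul_add_div hL, Nat.div_eq_of_lt (mem_range.1 hi), add_zero]
    have hconst {i : ℕ} (hi : i ∈ range L) : h (L * M + i) = h (L * M) :=
      hh _ _ (by rw [hdiv hi, Nat.mul_div_cancel_left M hL])
    have havg {i : ℕ} (hi : i ∈ range L) :
        blockAvg L f (L * M + i) = (∑ i ∈ range L, f (L * M + i)) / L := by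
      rw [blockAvg, hdiv hi]
    rw [Nat.mul_succ, sum_range_add, sum_range_add, ih]
    congr 1
    calc ∑ i ∈ range L, h (L * M + i) * blockAvg L f (L * M + i)
        = ∑ _i ∈ range L, h (L * M) * ((∑ i ∈ range L, f (L * M + i)) / L) :=
          sum_congr rfl fun i hi => by rw [hconst hi, havg hi]
      _ = ∑ i ∈ range L, h (L * M) * f (L * M + i) := by
          rw [sum_const, card_range, nsmul_eq_mul, ← mul_sum]
          field_simp
      _ = ∑ i ∈ range L, h (L * M + i) * f (L * M + i) :=
          sum_congr rfl fun i hi => by rw [hconst hi]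

lemma sum_sq_blockAvg_sub (hL : L ∣ L') (hN : L' ∣ N) :
    ∑ x ∈ range N, (blockAvg L f x - blockAvg L' f x) ^ 2 =
      ∑ x ∈ range N, blockAvg L f x ^ 2 - ∑ x ∈ range N, blockAvg L' f x ^ 2 := by
  have coarsen {x y : ℕ} (h : x / L = y / L) : x / L' = y / L' := by
    obtain ⟨d, rfl⟩ := hL
    rw [← Nat.div_div_eq_div_mul, ← Nat.div_div_eq_div_mul, h]
  have hcross : ∑ x ∈ range N, blockAvg L' f x * blockAvg L f x =
      ∑ x ∈ range N, blockAvg L' f x ^ 2 := by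
    simp only [sq]
    rw [sum_mul_blockAvg (hL.trans hN) fun x y h => blockAvg_congr (coarsen h),
      sum_mul_blockAvg hN fun x y h => blockAvg_congr h]
  calc ∑ x ∈ range N, (blockAvg L f x - blockAvg L' f x) ^ 2
      = ∑ x ∈ range N, blockAvg L f x ^ 2 - 2 * ∑ x ∈ range N, blockAvg L' f x * blockAvg L f x
          + ∑ x ∈ range N, blockAvg L' f x ^ 2 := by
        rw [mul_sum, ← sum_sub_distrib, ← sum_add_distrib]
        exact sum_congr rfl fun x _ => by ring
    _ = ∑ x ∈ range N, blockAvg L f x ^ 2 - ∑ x ∈ range N, blockAvg L' f x ^ 2 := by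
        rw [hcross]; ring

lemma sum_sq_blockAvg_le (hN : L ∣ N) (hf0 : ∀ x, 0 ≤ f x) (hf1 : ∀ x, f x ≤ 1) :
    ∑ x ∈ range N, blockAvg L f x ^ 2 ≤ ∑ x ∈ range N, f x := by
  simp only [sq]
  rw [sum_mul_blockAvg hN fun x y h => blockAvg_congr h]
  exact sum_le_sum fun x _ => mul_le_of_le_one_left (hf0 x) (blockAvg_le_one hf1 x)

lemma abs_sum_range_sub_blockAvg_le (hL : 0 < L) (hf0 : ∀ x, 0 ≤ f x) (hf1 : ∀ x, f x ≤ 1)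
    (a : ℕ) : |∑ x ∈ range a, (f x - blockAvg L f x)| ≤ L := by
  have hfull : ∑ x ∈ range (L * (a / L)), (f x - blockAvg L f x) = 0 := by
    rw [sum_sub_distrib, sub_eq_zero]
    simpa using (sum_mul_blockAvg (f := f) (h := 1) (dvd_mul_right L (a / L))
      fun _ _ _ => rfl).symm
  have hterm (x : ℕ) : |f x - blockAvg L f x| ≤ 1 :=
    abs_sub_le_of_nonneg_of_le (hf0 x) (hf1 x) (blockAvg_nonneg hf0 x) (blockAvg_le_one hf1 x)
  rw [← Nat.div_add_mod a L, sum_range_add, hfull, zero_add]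
  calc |∑ i ∈ range (a % L), (f (L * (a / L) + i) - blockAvg L f (L * (a / L) + i))|
      ≤ ∑ _i ∈ range (a % L), (1 : ℝ) :=
        (abs_sum_le_sum_abs _ _).trans (sum_le_sum fun _ _ => hterm _)
    _ ≤ L := by simpa using (Nat.mod_lt a hL).le

lemma sum_Ico_le_sum_blockAvg_add (hL : 0 < L) (hf0 : ∀ x, 0 ≤ f x) (hf1 : ∀ x, f x ≤ 1)
    {a b : ℕ} (hab : a ≤ b) :
    ∑ x ∈ Ico a b, f x ≤ ∑ x ∈ Ico a b, blockAvg L f x + 2 * L := by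
  have hdiff : ∑ x ∈ Ico a b, (f x - blockAvg L f x) ≤ 2 * L := by
    rw [sum_Ico_eq_sub _ hab]
    linarith [(abs_le.1 (abs_sum_range_sub_blockAvg_le hL hf0 hf1 a)).1,
      (abs_le.1 (abs_sum_range_sub_blockAvg_le hL hf0 hf1 b)).2]
  rw [sum_sub_distrib] at hdiff
  linarith

end BlockAverages

section Subdensities

variable {α : Type*} [Fintype α] {f : α → ℕ → ℝ} {L L' N : ℕ}

/-- A family of nonnegative functions indexed by the letters and summing to at most `1` at each
position; it abstracts the local letter frequencies of a word. -/
structure IsSubdensity (f : α → ℕ → ℝ) : Prop where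
  nonneg : ∀ a x, 0 ≤ f a x
  sum_le_one : ∀ x, ∑ a, f a x ≤ 1

lemma IsSubdensity.le_one (hf : IsSubdensity f) (a : α) (x : ℕ) : f a x ≤ 1 :=
  (single_le_sum (f := fun a => f a x) (fun b _ => hf.nonneg b x) (mem_univ a)).trans
    (hf.sum_le_one x)

lemma IsSubdensity.blockAvg (hf : IsSubdensity f) (L : ℕ) :
    IsSubdensity fun a => blockAvg L (f a) where
  nonneg a := blockAvg_nonneg (hf.nonneg a)
  sum_le_one x := by
    rw [← blockAvg_sum]
    exact blockAvg_le_one hf.sum_le_one x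

/-- The energy of a family on `[0, N)` at scale `L`: the total squared norm of its block averages.
It is meaningful when `L ∣ N`. -/
noncomputable def energy (f : α → ℕ → ℝ) (N L : ℕ) : ℝ :=
  ∑ a, ∑ x ∈ range N, blockAvg L (f a) x ^ 2

lemma energy_nonneg : 0 ≤ energy f N L :=
  sum_nonneg fun _ _ => sum_nonneg fun _ _ => sq_nonneg _

lemma energy_le (hf : IsSubdensity f) (hN : L ∣ N) :
    energy f N L ≤ ∑ a, ∑ x ∈ range N, f a x :=
  sum_le_sum fun a _ => sum_sq_blockAvg_le hN (hf.nonneg a) (hf.le_one a)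

/-- The Euclidean distance, over all letters, between the block averages of `f` around `x` at the
scales `L` and `L'`. -/
noncomputable def scaleGap (f : α → ℕ → ℝ) (L L' x : ℕ) : ℝ :=
  √(∑ a, (blockAvg L (f a) x - blockAvg L' (f a) x) ^ 2)

lemma scaleGap_nonneg (x : ℕ) : 0 ≤ scaleGap f L L' x := Real.sqrt_nonneg _

lemma blockAvg_le_add_scaleGap (a : α) (x : ℕ) :
    blockAvg L (f a) x ≤ blockAvg L' (f a) x + scaleGap f L L' x := by
  rw [← sub_le_iff_le_add']
  exact Real.le_sqrt_of_sq_le <| single_le_sum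
    (f := fun a => (blockAvg L (f a) x - blockAvg L' (f a) x) ^ 2)
    (fun _ _ => sq_nonneg _) (mem_univ a)

lemma sum_sq_scaleGap (hL : L ∣ L') (hN : L' ∣ N) :
    ∑ x ∈ range N, scaleGap f L L' x ^ 2 = energy f N L - energy f N L' := by
  simp only [scaleGap, Real.sq_sqrt (sum_nonneg fun _ _ => sq_nonneg _)]
  rw [sum_comm, energy, energy, ← sum_sub_distrib]
  exact sum_congr rfl fun a _ => sum_sq_blockAvg_sub hL hN

lemma energy_le_energy_of_dvd (hL : L ∣ L') (hN : L' ∣ N) : energy f N L' ≤ energy f N L := by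
  rw [← sub_nonneg, ← sum_sq_scaleGap hL hN]
  exact sum_nonneg fun _ _ => sq_nonneg _

lemma sq_sum_scaleGap_le {M : ℕ} (hL : L ∣ L') (hN : L' ∣ N) (hM : M ≤ N) :
    (∑ x ∈ range M, scaleGap f L L' x) ^ 2 ≤ M * (energy f N L - energy f N L') := by
  rw [← sum_sq_scaleGap hL hN]
  calc (∑ x ∈ range M, scaleGap f L L' x) ^ 2
      ≤ M * ∑ x ∈ range M, scaleGap f L L' x ^ 2 := by
        simpa using sq_sum_le_card_mul_sum_sq (s := range M) (f := scaleGap f L L')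
    _ ≤ M * ∑ x ∈ range N, scaleGap f L L' x ^ 2 := by
        gcongr

end Subdensities

section RunGain

/-- The largest value of `c * w - W` per unit of run length, when `w ≤ 1` letters are matched in a
window of width `W` in which the letter has density `p`, so that `w ≤ p * W`. -/
noncomputable def runGain (c p : ℝ) : ℝ := if 1 < c * p then c - p⁻¹ else 0

lemma mul_sub_le_mul_runGain {c p r w W e : ℝ} (hc : 0 ≤ c) (hp : 0 ≤ p) (hW : 0 ≤ W)
    (he : 0 ≤ e) (hwr : w ≤ r) (hw : w ≤ p * W + e) :
    c * w - W ≤ r * runGain c p + c * e := by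
  rw [runGain]
  split_ifs with hcp
  · have hp0 : 0 < p := hp.lt_of_ne (by rintro rfl; norm_num at hcp)
    have hgain : 0 ≤ c - p⁻¹ := by
      rw [sub_nonneg, inv_le_iff_one_le_mul₀ hp0]
      exact hcp.le
    have hwidth : (w - e) * p⁻¹ ≤ W := by
      rw [← div_eq_mul_inv, div_le_iff₀ hp0]
      linarith
    have hrun : (w - e) * (c - p⁻¹) ≤ r * (c - p⁻¹) :=
      mul_le_mul_of_nonneg_right (by linarith) hgain
    linarith
  · have hcpW : c * p * W ≤ 1 * W := mul_le_mul_of_nonneg_right (not_lt.1 hcp) hW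
    have hcw : c * w ≤ c * (p * W + e) := mul_le_mul_of_nonneg_left hw hc
    linarith

/-- The tangent line to `p ↦ p⁻¹` at `p = t⁻¹`. -/
lemma two_mul_sub_sq_mul_le_inv {p : ℝ} (hp : 0 < p) (t : ℝ) : 2 * t - t ^ 2 * p ≤ p⁻¹ := by
  rw [← sub_nonneg]
  have hsq : p⁻¹ - (2 * t - t ^ 2 * p) = (1 - t * p) ^ 2 / p := by
    field_simp
    ring
  rw [hsq]
  positivity

lemma mul_sub_self_le (z t : ℕ) : (t : ℝ) * (2 * z + 1 - t) ≤ z * (z + 1) := by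
  have hprod : (0 : ℤ) ≤ ((t : ℤ) - z) * (t - z - 1) := by
    rcases le_or_gt (t : ℤ) z with h | h
    · exact mul_nonneg_of_nonpos_of_nonpos (by omega) (by omega)
    · exact mul_nonneg (by omega) (by omega)
  have hprodR : (0 : ℝ) ≤ ((t : ℝ) - z) * (t - z - 1) := mod_cast hprod
  linarith

lemma sum_runGain_le {α : Type*} [Fintype α] {p : α → ℝ} (hp : ∀ a, 0 ≤ p a)
    (hsum : ∑ a, p a ≤ 1) (z : ℕ) :
    ∑ a, runGain (2 * z + 1) (p a) ≤ z * (z + 1) := by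
  simp only [runGain, ← sum_filter]
  set S := univ.filter fun a => 1 < (2 * (z : ℝ) + 1) * p a
  set t : ℝ := (#S : ℝ)
  have hSsum : ∑ a ∈ S, p a ≤ 1 :=
    (sum_le_univ_sum_of_nonneg hp).trans hsum
  have htangent (a : α) (ha : a ∈ S) :
      2 * (z : ℝ) + 1 - (p a)⁻¹ ≤ 2 * z + 1 - 2 * t + t ^ 2 * p a := by
    have hlarge : 1 < (2 * (z : ℝ) + 1) * p a := (mem_filter.1 ha).2
    have hpa : 0 < p a := (hp a).lt_of_ne fun h => by rw [← h] at hlarge; norm_num at hlarge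
    linarith [two_mul_sub_sq_mul_le_inv hpa t]
  calc ∑ a ∈ S, (2 * (z : ℝ) + 1 - (p a)⁻¹)
      ≤ ∑ a ∈ S, (2 * z + 1 - 2 * t + t ^ 2 * p a) := sum_le_sum htangent
    _ = t * (2 * z + 1 - 2 * t) + t ^ 2 * ∑ a ∈ S, p a := by
        rw [sum_add_distrib, sum_const, nsmul_eq_mul, ← mul_sum]
    _ ≤ t * (2 * z + 1 - 2 * t) + t ^ 2 * 1 := by gcongr
    _ = t * (2 * z + 1 - t) := by ring
    _ ≤ z * (z + 1) := mul_sub_self_le z #S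

end RunGain

section Windows

variable {q z L L' : ℕ} {r : ℝ}

/-- The number of letters of a run of length `r` that can be matched in the window `[a, b)`, where
`g` is the density of the letter of the run. -/
noncomputable def windowMatch (g : ℕ → ℝ) (r : ℝ) (a b : ℕ) : ℝ := min r (∑ x ∈ Ico a b, g x)

lemma windowMatch_gain_le_of_crossing {g : ℕ → ℝ} (hg : ∀ x, g x ≤ 1) {a b : ℕ} (hab : a ≤ b) :
    (2 * z + 1) * windowMatch g r a b - ((b : ℝ) - a) ≤ 2 * z * r := by
  have hwidth : windowMatch g r a b ≤ (b : ℝ) - a := by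
    refine (min_le_right _ _).trans ?_
    rw [← Nat.cast_sub hab]
    simpa using sum_le_card_nsmul (Ico a b) g 1 fun x _ => hg x
  have hrun : 2 * (z : ℝ) * windowMatch g r a b ≤ 2 * z * r := by
    gcongr
    exact min_le_left _ _
  linarith

lemma windowMatch_gain_le {g G : ℕ → ℝ} {p c : ℝ} (hc : 0 ≤ c) (hL : 0 < L)
    (hg0 : ∀ x, 0 ≤ g x) (hg1 : ∀ x, g x ≤ 1) (hp : 0 ≤ p) (hG : ∀ x, 0 ≤ G x) {a b : ℕ}
    (hab : a ≤ b) (hgp : ∀ x ∈ Ico a b, blockAvg L g x ≤ p + G x) :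
    c * windowMatch g r a b - ((b : ℝ) - a) ≤
      r * runGain c p + c * (2 * L + ∑ x ∈ Ico a b, G x) := by
  have hab' : (0 : ℝ) ≤ (b : ℝ) - a := sub_nonneg.2 (Nat.cast_le.2 hab)
  have hGsum : 0 ≤ ∑ x ∈ Ico a b, G x := sum_nonneg fun x _ => hG x
  refine mul_sub_le_mul_runGain hc hp hab' (by positivity) (min_le_left _ _) ?_
  calc windowMatch g r a b
      ≤ ∑ x ∈ Ico a b, g x := min_le_right _ _
    _ ≤ ∑ x ∈ Ico a b, blockAvg L g x + 2 * L := sum_Ico_le_sum_blockAvg_add hL hg0 hg1 hab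
    _ ≤ ∑ x ∈ Ico a b, (p + G x) + 2 * L := by gcongr with x hx; exact hgp x hx
    _ = p * ((b : ℝ) - a) + (2 * L + ∑ x ∈ Ico a b, G x) := by
        rw [sum_add_distrib, sum_const, Nat.card_Ico, nsmul_eq_mul, Nat.cast_sub hab]
        ring

variable {t : ℕ → ℕ} {f : Fin q → ℕ → ℝ}

lemma sum_window_widths (t : ℕ → ℕ) (q : ℕ) :
    ∑ i : Fin q, ((t (i + 1) : ℝ) - t i) = t q - t 0 := by
  rw [← sum_range_sub (fun i => (t i : ℝ)), sum_range]

lemma sum_sum_windows (ht : Monotone t) (G : ℕ → ℝ) (q : ℕ) :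
    ∑ i : Fin q, ∑ x ∈ Ico (t i) (t (i + 1)), G x = ∑ x ∈ Ico (t 0) (t q), G x := by
  rw [← sum_range fun i => ∑ x ∈ Ico (t i) (t (i + 1)), G x]
  induction q with
  | zero => simp
  | succ q ih =>
    rw [sum_range_succ, ih, sum_Ico_consecutive _ (ht (Nat.zero_le q)) (ht q.le_succ)]

lemma period_gain_le_of_crossing (hf : IsSubdensity f) (ht : Monotone t) :
    (2 * z + 1) * ∑ i : Fin q, windowMatch (f i) r (t i) (t (i + 1)) - ((t q : ℝ) - t 0) ≤
      2 * z * q * r := by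
  rw [← sum_window_widths, mul_sum, ← sum_sub_distrib]
  refine (sum_le_sum fun (i : Fin q) _ =>
    windowMatch_gain_le_of_crossing (hf.le_one i) (ht (Nat.le_succ i))).trans_eq ?_
  rw [sum_const, card_univ, Fintype.card_fin, nsmul_eq_mul]
  ring

lemma period_gain_le_of_same_block (hf : IsSubdensity f) (hL : 0 < L) (hr : 0 ≤ r)
    (ht : Monotone t) (hblock : t 0 / L' = t q / L') :
    (2 * z + 1) * ∑ i : Fin q, windowMatch (f i) r (t i) (t (i + 1)) - ((t q : ℝ) - t 0) ≤
      r * (z * (z + 1)) +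
        (2 * z + 1) * (q * (2 * L) + ∑ x ∈ Ico (t 0) (t q), scaleGap f L L' x) := by
  have hp := hf.blockAvg L'
  have hconst (i : Fin q) {x : ℕ} (hx : x ∈ Ico (t i) (t (i + 1))) :
      blockAvg L' (f i) x = blockAvg L' (f i) (t 0) := by
    obtain ⟨hxi, hxi'⟩ := mem_Ico.1 hx
    have hlo : t 0 ≤ x := (ht (Nat.zero_le _)).trans hxi
    have hhi : x ≤ t q := hxi'.le.trans (ht i.isLt)
    exact blockAvg_congr (le_antisymm (hblock ▸ Nat.div_le_div_right hhi)
      (Nat.div_le_div_right hlo))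
  have hwindow (i : Fin q) :
      (2 * z + 1) * windowMatch (f i) r (t i) (t (i + 1)) - ((t (i + 1) : ℝ) - t i) ≤
        r * runGain (2 * z + 1) (blockAvg L' (f i) (t 0)) +
          (2 * z + 1) * (2 * L + ∑ x ∈ Ico (t i) (t (i + 1)), scaleGap f L L' x) :=
    windowMatch_gain_le (by positivity) hL (hf.nonneg i) (hf.le_one i) (hp.nonneg i _)
      scaleGap_nonneg (ht (Nat.le_succ i)) fun x hx =>
        (blockAvg_le_add_scaleGap i x).trans_eq (by rw [hconst i hx])
  calc (2 * z + 1) * ∑ i : Fin q, windowMatch (f i) r (t i) (t (i + 1)) - ((t q : ℝ) - t 0)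
      = ∑ i : Fin q, ((2 * z + 1) * windowMatch (f i) r (t i) (t (i + 1))
          - ((t (i + 1) : ℝ) - t i)) := by
        rw [sum_sub_distrib, ← mul_sum, sum_window_widths]
    _ ≤ ∑ i : Fin q, (r * runGain (2 * z + 1) (blockAvg L' (f i) (t 0)) +
          (2 * z + 1) * (2 * L + ∑ x ∈ Ico (t i) (t (i + 1)), scaleGap f L L' x)) :=
        sum_le_sum fun i _ => hwindow i
    _ = r * ∑ i, runGain (2 * z + 1) (blockAvg L' (f i) (t 0)) +
          (2 * z + 1) * (q * (2 * L) + ∑ x ∈ Ico (t 0) (t q), scaleGap f L L' x) := by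
        rw [sum_add_distrib, ← mul_sum, ← mul_sum, sum_add_distrib, sum_sum_windows ht, sum_const,
          card_univ, Fintype.card_fin, nsmul_eq_mul]
    _ ≤ _ := by
        gcongr
        exact sum_runGain_le (fun a => hp.nonneg a _) (hp.sum_le_one _) z

lemma period_gain_le (hf : IsSubdensity f) (hL : 0 < L) (hr : 0 ≤ r) (ht : Monotone t) :
    (2 * z + 1) * ∑ i : Fin q, windowMatch (f i) r (t i) (t (i + 1)) - ((t q : ℝ) - t 0) ≤
      r * (z * (z + 1)) + 2 * z * q * r * (((t q / L' : ℕ) : ℝ) - (t 0 / L' : ℕ)) +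
        (2 * z + 1) * (q * (2 * L) + ∑ x ∈ Ico (t 0) (t q), scaleGap f L L' x) := by
  have hgap : 0 ≤ ∑ x ∈ Ico (t 0) (t q), scaleGap f L L' x :=
    sum_nonneg fun x _ => scaleGap_nonneg x
  have hblocks : t 0 / L' ≤ t q / L' := Nat.div_le_div_right (ht (Nat.zero_le q))
  rcases hblocks.eq_or_lt with hsame | hcross
  · rw [hsame, sub_self, mul_zero, add_zero]
    exact period_gain_le_of_same_block hf hL hr ht hsame
  · have hone : (1 : ℝ) ≤ ((t q / L' : ℕ) : ℝ) - (t 0 / L' : ℕ) := by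
      rw [le_sub_iff_add_le']
      exact_mod_cast hcross
    calc _ ≤ 2 * z * q * r * 1 := by
          rw [mul_one]
          exact period_gain_le_of_crossing hf ht
      _ ≤ 2 * z * q * r * (((t q / L' : ℕ) : ℝ) - (t 0 / L' : ℕ)) := by gcongr
      _ ≤ _ := by
          have hperiod : 0 ≤ r * ((z : ℝ) * (z + 1)) := by positivity
          have herror : 0 ≤ (2 * (z : ℝ) + 1) *
              (q * (2 * L) + ∑ x ∈ Ico (t 0) (t q), scaleGap f L L' x) := by positivity
          linarith

lemma finOfNat_mul_add [NeZero q] (Q : ℕ) (i : Fin q) : Fin.ofNat q (q * Q + i) = i := by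
  ext
  simp [Nat.mod_eq_of_lt i.isLt]

lemma sum_windowMatch_gain_le [NeZero q] (hf : IsSubdensity f) (hL : 0 < L) (hr : 0 ≤ r)
    (ht : Monotone t) (ht0 : t 0 = 0) (Q : ℕ) :
    (2 * z + 1) * ∑ j ∈ range (q * Q), windowMatch (f (Fin.ofNat q j)) r (t j) (t (j + 1))
        - (t (q * Q) : ℝ) ≤
      Q * (r * (z * (z + 1))) + 2 * z * q * r * (t (q * Q) / L' : ℕ) +
        (2 * z + 1) * (Q * (q * (2 * L)) + ∑ x ∈ range (t (q * Q)), scaleGap f L L' x) := by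
  induction Q with
  | zero => simp [ht0]
  | succ Q ih =>
    have hperiod := period_gain_le (z := z) (L' := L') (t := fun i => t (q * Q + i)) hf hL hr
      fun i j hij => ht (Nat.add_le_add_left hij _)
    have hletters : ∑ i ∈ range q, windowMatch (f (Fin.ofNat q (q * Q + i))) r
          (t (q * Q + i)) (t (q * Q + i + 1)) =
        ∑ i : Fin q, windowMatch (f i) r (t (q * Q + i)) (t (q * Q + (i + 1))) := by
      rw [sum_range]
      exact sum_congr rfl fun i _ => by rw [finOfNat_mul_add, add_assoc]
    rw [Nat.mul_succ, sum_range_add, hletters,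
      ← sum_range_add_sum_Ico _ (ht (Nat.le_add_right (q * Q) q))]
    simp only [add_zero] at hperiod
    push_cast
    linarith

end Windows

section Words

variable {α : Type*} [DecidableEq α]

/-- The indicator of the positions of the letter `a` in the word `v`; it vanishes beyond the end
of `v`. -/
noncomputable def letterInd (v : List α) (a : α) (x : ℕ) : ℝ := if v[x]? = some a then 1 else 0

lemma letterInd_nonneg (v : List α) (a : α) (x : ℕ) : 0 ≤ letterInd v a x := by
  unfold letterInd
  positivity

lemma letterInd_append_left {v : List α} {x : ℕ} (hx : x < v.length) (v' : List α) (a : α) :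
    letterInd (v ++ v') a x = letterInd v a x := by
  rw [letterInd, letterInd, List.getElem?_append_left hx]

lemma letterInd_append_right (v v' : List α) (a : α) (x : ℕ) :
    letterInd (v ++ v') a (v.length + x) = letterInd v' a x := by
  rw [letterInd, letterInd, List.getElem?_append_right (Nat.le_add_right _ _),
    Nat.add_sub_cancel_left]

lemma sum_range_letterInd (v : List α) (a : α) :
    ∑ x ∈ range v.length, letterInd v a x = v.count a := by
  induction v with
  | nil => simp
  | cons b v ih =>
    have htail (x : ℕ) : letterInd (b :: v) a (x + 1) = letterInd v a x := by simp [letterInd]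
    rw [List.length_cons, sum_range_succ', sum_congr rfl fun x _ => htail x, ih, List.count_cons]
    simp [letterInd]

lemma sum_letterInd_le [Fintype α] (v : List α) (x : ℕ) :
    ∑ a, letterInd v a x ≤ if x < v.length then 1 else 0 := by
  unfold letterInd
  split_ifs with hx
  · simp [List.getElem?_eq_getElem hx]
  · simp [List.getElem?_eq_none (not_lt.1 hx)]

lemma isSubdensity_letterInd [Fintype α] (v : List α) : IsSubdensity (letterInd v) where
  nonneg := letterInd_nonneg v
  sum_le_one x := (sum_letterInd_le v x).trans (by split_ifs <;> norm_num)

lemma sum_sum_letterInd_le [Fintype α] (v : List α) (N : ℕ) :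
    ∑ a, ∑ x ∈ range N, letterInd v a x ≤ v.length := by
  rw [sum_comm]
  calc ∑ x ∈ range N, ∑ a, letterInd v a x
      ≤ ∑ x ∈ range N, (if x < v.length then (1 : ℝ) else 0) :=
        sum_le_sum fun x _ => sum_letterInd_le v x
    _ = #{x ∈ range N | x < v.length} := by simp
    _ ≤ #(range v.length) := by
        gcongr
        exact fun x hx => mem_range.2 (mem_filter.1 hx).2
    _ = v.length := by rw [card_range]

omit [DecidableEq α] in
lemma map_range_succ_mul {r : ℕ} (hr : 0 < r) (c : ℕ → α) (M : ℕ) :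
    (List.range ((M + 1) * r)).map (fun t => c (t / r)) =
      (List.range (M * r)).map (fun t => c (t / r)) ++ List.replicate r (c M) := by
  rw [add_mul, one_mul, List.range_add, List.map_append, List.map_map, List.append_cancel_left_eq,
    List.eq_replicate_iff]
  refine ⟨by simp, fun b hb => ?_⟩
  obtain ⟨t, ht, rfl⟩ := List.mem_map.1 hb
  rw [Function.comp_apply, add_comm, Nat.add_mul_div_right _ _ hr,
    Nat.div_eq_of_lt (List.mem_range.1 ht), zero_add]

lemma length_le_windowMatch_append {r a : ℕ} {b : α} {u v v' : List α}
    (hu : u.Sublist (List.replicate r b)) (huv : u.Sublist v') (ha : a ≤ v.length) :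
    (u.length : ℝ) ≤ windowMatch (letterInd (v ++ v') b) r a (v ++ v').length := by
  refine le_min (mod_cast hu.length_le.trans_eq List.length_replicate) ?_
  have hcount : u.length ≤ v'.count b := by
    have hlen : u.count b = u.length :=
      List.count_eq_length.2 fun x hx => (List.eq_of_mem_replicate (hu.subset hx)).symm
    exact hlen ▸ huv.count_le b
  calc (u.length : ℝ) ≤ v'.count b := mod_cast hcount
    _ = ∑ x ∈ Ico v.length (v ++ v').length, letterInd (v ++ v') b x := by
        rw [← sum_range_letterInd, List.length_append, sum_Ico_eq_sum_range,
          Nat.add_sub_cancel_left]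
        exact sum_congr rfl fun x _ => (letterInd_append_right v v' b x).symm
    _ ≤ ∑ x ∈ Ico a (v ++ v').length, letterInd (v ++ v') b x :=
        sum_le_sum_of_subset_of_nonneg (Ico_subset_Ico_left ha) fun x _ _ => letterInd_nonneg _ _ _

lemma windowMatch_letterInd_append {r : ℝ} {a b : ℕ} {v : List α} (hb : b ≤ v.length)
    (v' : List α) (c : α) :
    windowMatch (letterInd (v ++ v') c) r a b = windowMatch (letterInd v c) r a b := by
  rw [windowMatch, windowMatch]
  congr 1
  exact sum_congr rfl fun x hx =>
    letterInd_append_left ((mem_Ico.1 hx).2.trans_le hb) v' c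

lemma exists_windows {r : ℕ} (hr : 0 < r) (c : ℕ → α) (M : ℕ) {u v : List α}
    (hu : u.Sublist ((List.range (M * r)).map fun t => c (t / r))) (huv : u.Sublist v) :
    ∃ t : ℕ → ℕ, Monotone t ∧ t 0 = 0 ∧ t M ≤ v.length ∧
      (u.length : ℝ) ≤ ∑ j ∈ range M, windowMatch (letterInd v (c j)) r (t j) (t (j + 1)) := by
  induction M generalizing u v with
  | zero =>
    obtain rfl : u = [] := by simpa using hu
    exact ⟨fun _ => 0, monotone_const, rfl, Nat.zero_le _, by simp⟩
  | succ M ih =>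
    rw [map_range_succ_mul hr, List.sublist_append_iff] at hu
    obtain ⟨u₁, u₂, rfl, hu₁, hu₂⟩ := hu
    obtain ⟨v₁, v₂, rfl, huv₁, huv₂⟩ := List.append_sublist_iff.1 huv
    obtain ⟨t, ht, ht0, htM, hlen⟩ := ih hu₁ huv₁
    have hend : t M ≤ (v₁ ++ v₂).length := by
      rw [List.length_append]
      omega
    refine ⟨fun j => if j ≤ M then t j else (v₁ ++ v₂).length, fun i j hij => ?_,
      by simpa using ht0, by simp, ?_⟩
    · dsimp only
      split_ifs with hi hj
      · exact ht hij
      · exact (ht hi).trans hend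
      · omega
      · exact le_rfl
    · rw [sum_range_succ, List.length_append, Nat.cast_add]
      refine add_le_add (hlen.trans_eq (sum_congr rfl fun j hj => ?_)) ?_
      · have hjM : j + 1 ≤ M := mem_range.1 hj
        simp only [Nat.le_of_succ_le hjM, hjM, if_true]
        rw [windowMatch_letterInd_append ((ht hjM).trans htM)]
      · simp only [le_refl, Nat.not_succ_le_self, if_true, if_false]
        exact length_le_windowMatch_append hu₂ huv₂ htM

end Words

section Advantage

variable {q z : ℕ} {v : List (Fin q)}

lemma bukhMaQ_eq_map [NeZero q] (r l : ℕ) :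
    bukhMaQ q r l = (List.range l).map fun t => Fin.ofNat q (t / r) := by
  rw [bukhMaQ, dif_pos (NeZero.pos q)]
  rfl

lemma length_bukhMaQ [NeZero q] (r l : ℕ) : (bukhMaQ q r l).length = l := by
  simp [bukhMaQ_eq_map]

lemma bukhMaQ_sublist [NeZero q] (r : ℕ) {l l' : ℕ} (h : l ≤ l') :
    (bukhMaQ q r l).Sublist (bukhMaQ q r l') := by
  rw [bukhMaQ_eq_map, bukhMaQ_eq_map]
  exact (List.range_sublist.2 h).map _

lemma advantage_le [NeZero q] {u : List (Fin q)} {r L L' Q : ℕ} (hr : 0 < r) (hL : 0 < L)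
    (huv : u.Sublist v) (hu : u.Sublist (bukhMaQ q r (q * Q * r))) :
    (2 * z + 1) * (u.length : ℝ) - v.length ≤
      Q * (r * (z * (z + 1))) + 2 * z * q * r * (v.length / L') +
        (2 * z + 1) *
          (Q * (q * (2 * L)) + ∑ x ∈ range v.length, scaleGap (letterInd v) L L' x) := by
  rw [bukhMaQ_eq_map] at hu
  obtain ⟨t, ht, ht0, htv, hlen⟩ := exists_windows hr (Fin.ofNat q) (q * Q) hu huv
  have htvR : (t (q * Q) : ℝ) ≤ v.length := mod_cast htv
  have hgain := sum_windowMatch_gain_le (z := z) (L' := L') (isSubdensity_letterInd v) hL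
    (Nat.cast_nonneg r) ht ht0 Q
  have hmatched := mul_le_mul_of_nonneg_left hlen (by positivity : 0 ≤ 2 * (z : ℝ) + 1)
  calc (2 * z + 1) * (u.length : ℝ) - v.length
      ≤ Q * (r * (z * (z + 1))) + 2 * z * q * r * (t (q * Q) / L' : ℕ) +
          (2 * z + 1) * (Q * (q * (2 * L)) +
            ∑ x ∈ range (t (q * Q)), scaleGap (letterInd v) L L' x) := by
        linarith
    _ ≤ _ := by
        gcongr
        · exact Nat.cast_div_le.trans (by gcongr)
        · exact fun x _ _ => scaleGap_nonneg x

end Advantage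

section Estimates

variable {q z r T L Q n N ε : ℝ}

lemma sq_mul_period_le {q ε L T n : ℝ} (hL : 0 ≤ L) (hT : 0 ≤ T) (hε : 0 ≤ ε)
    (hqT : 96 * q ^ 2 ≤ ε * T) (hn : L * T * T ≤ n) : 96 * q ^ 2 * (L * T) ≤ ε * n := by
  calc 96 * q ^ 2 * (L * T) ≤ ε * T * (L * T) := by gcongr
    _ = ε * (L * T * T) := by ring
    _ ≤ ε * n := by gcongr

lemma period_term_le (hz : 0 ≤ z) (hzq : z + 1 ≤ q) (hr : 0 ≤ r) (hrn : 96 * q ^ 2 * r ≤ ε * n)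
    (hQ : q * Q * r ≤ n + q * r) :
    Q * (r * (z * (z + 1))) ≤ n * (z * (z + 1) / q) + z * (ε * n) / 8 := by
  have hq : 0 < q := by linarith
  have hQr : Q * r ≤ n / q + r := by
    rw [← sub_le_iff_le_add, le_div_iff₀ hq]
    linarith
  have hqr : r * (z + 1) ≤ ε * n / 8 := by
    nlinarith [mul_nonneg hr (by nlinarith : 0 ≤ q ^ 2 - (z + 1)), mul_nonneg hr (sq_nonneg q)]
  calc Q * (r * (z * (z + 1))) = Q * r * (z * (z + 1)) := by ring
    _ ≤ (n / q + r) * (z * (z + 1)) := by gcongr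
    _ = n * (z * (z + 1) / q) + z * (r * (z + 1)) := by ring
    _ ≤ n * (z * (z + 1) / q) + z * (ε * n / 8) := by gcongr
    _ = n * (z * (z + 1) / q) + z * (ε * n) / 8 := by ring

lemma crossing_term_le (hz : 0 ≤ z) (hq : 0 ≤ q) (hr : 0 < r) (hT : 0 < T) (hn : 0 ≤ n)
    (hqT : 96 * q ^ 2 ≤ ε * T) (hN : N ≤ 2 * q * n) :
    2 * z * q * r * (N / (r * T)) ≤ z * (ε * n) / 8 := by
  have hcancel : 2 * z * q * r * (N / (r * T)) = 2 * z * q * N / T := by field_simp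
  rw [hcancel, div_le_iff₀ hT]
  calc 2 * z * q * N ≤ 2 * z * q * (2 * q * n) := by gcongr
    _ ≤ z * n * (96 * q ^ 2) / 8 := by nlinarith [mul_nonneg (mul_nonneg hz hn) (sq_nonneg q)]
    _ ≤ z * n * (ε * T) / 8 := by gcongr
    _ = z * (ε * n) / 8 * T := by ring

lemma rounding_term_le (hz : 1 ≤ z) (hq : 1 ≤ q) (hL : 0 ≤ L) (hQ : 0 ≤ Q) (hε : 0 ≤ ε)
    (hqT : 96 * q ^ 2 ≤ ε * T) (hn : q * Q * (L * T) ≤ 2 * n) :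
    (2 * z + 1) * (Q * (q * (2 * L))) ≤ z * (ε * n) / 8 := by
  have hT : 96 ≤ ε * T := by nlinarith
  have hQL : q * Q * L * 96 ≤ 2 * (ε * n) := by
    calc q * Q * L * 96 ≤ q * Q * L * (ε * T) := by gcongr
      _ = ε * (q * Q * (L * T)) := by ring
      _ ≤ ε * (2 * n) := by gcongr
      _ = 2 * (ε * n) := by ring
  calc (2 * z + 1) * (Q * (q * (2 * L))) ≤ 3 * z * (Q * (q * (2 * L))) := by
        gcongr
        linarith
    _ = z * (q * Q * L * 96) / 16 := by ring
    _ ≤ z * (2 * (ε * n)) / 16 := by gcongr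
    _ = z * (ε * n) / 8 := by ring

end Estimates

section EnergyDrop

variable {q z n L T : ℕ} {ε : ℝ} {v y : List (Fin q)}

/-- The words `v` and `y` have a common subsequence `u` for which the advantage
`(2 * z + 1) * |u| - |v|` exceeds `|y| * z * (z + 1) / q` by `|y| * z * ε`. The first quantity is
what a word `v` with constant letter densities can attain against a codeword `y` with long runs. -/
def IsWellMatched (ε : ℝ) (z : ℕ) (v y : List (Fin q)) : Prop :=
  ∃ u : List (Fin q), u.Sublist v ∧ u.Sublist y ∧
    (y.length : ℝ) * (z * (z + 1) / q + z * ε) ≤ (2 * z + 1) * u.length - v.length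

lemma IsWellMatched.length_le (h : IsWellMatched ε z v y) (hε : 0 ≤ ε) (hzq : z < q) :
    (v.length : ℝ) ≤ 2 * q * y.length := by
  obtain ⟨u, -, huy, hadv⟩ := h
  have hzqR : (z : ℝ) + 1 ≤ q := mod_cast hzq
  have hbase : 0 ≤ (y.length : ℝ) * (z * (z + 1) / q + z * ε) := by positivity
  calc (v.length : ℝ) ≤ (2 * z + 1) * u.length := by linarith
    _ ≤ (2 * q) * y.length := by
      gcongr
      · linarith
      · exact huy.length_le

lemma IsWellMatched.length_pos (h : IsWellMatched ε z v y) (hε : 0 < ε) (hz : 0 < z)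
    (hy : 0 < y.length) : 0 < v.length := by
  obtain ⟨u, huv, -, hadv⟩ := h
  have hbase : 0 < (y.length : ℝ) * (z * (z + 1) / q + z * ε) := by positivity
  have hu : 0 < (2 * (z : ℝ) + 1) * u.length := by
    linarith [Nat.cast_nonneg (α := ℝ) v.length]
  exact (Nat.cast_pos.1 (pos_of_mul_pos_right hu (by positivity))).trans_le huv.length_le

lemma exists_period_count {q r : ℕ} (hq : 0 < q) (hr : 0 < r) (n : ℕ) :
    ∃ Q : ℕ, n ≤ q * Q * r ∧ q * Q * r ≤ n + q * r := by
  refine ⟨n / (q * r) + 1, ?_, ?_⟩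
  · linarith [Nat.lt_div_mul_add (a := n) (Nat.mul_pos hq hr)]
  · linarith [Nat.div_mul_le_self n (q * r)]

lemma IsWellMatched.le_sum_scaleGap (h : IsWellMatched ε z v (bukhMaQ q (L * T) n)) (hε : 0 < ε)
    (hε1 : ε ≤ 1) (hz : 0 < z) (hzq : z < q) (hL : 0 < L) (hT : 0 < T)
    (hqT : 96 * (q : ℝ) ^ 2 ≤ ε * T) (hn : L * T * T ≤ n) :
    n * ε / 6 ≤ ∑ x ∈ range v.length, scaleGap (letterInd v) L (L * T * T) x := by
  have : NeZero q := ⟨by omega⟩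
  have hvn := h.length_le hε.le hzq
  obtain ⟨u, huv, hu, hadv⟩ := h
  rw [length_bukhMaQ] at hvn hadv
  obtain ⟨Q, hnQ, hQn⟩ := exists_period_count (NeZero.pos q) (Nat.mul_pos hL hT) n
  have hgain := advantage_le (z := z) (L' := L * T * T) (Nat.mul_pos hL hT) hL huv
    (hu.trans (bukhMaQ_sublist _ hnQ))
  set S := ∑ x ∈ range v.length, scaleGap (letterInd v) L (L * T * T) x
  have hS : 0 ≤ S := sum_nonneg fun x _ => scaleGap_nonneg x
  have hzR : (1 : ℝ) ≤ z := mod_cast hz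
  have hzqR : (z : ℝ) + 1 ≤ q := mod_cast hzq
  have hnR : (L : ℝ) * T * T ≤ n := mod_cast hn
  have hQnR : (q : ℝ) * Q * (L * T) ≤ n + q * (L * T) := mod_cast hQn
  have hrn := sq_mul_period_le (Nat.cast_nonneg L) (Nat.cast_nonneg T) hε.le hqT hnR
  have hQn2 : (q : ℝ) * Q * (L * T) ≤ 2 * n := by
    have hqr : (q : ℝ) * (L * T) ≤ 96 * q ^ 2 * (L * T) := by
      gcongr
      nlinarith
    have hεn : ε * n ≤ 1 * n := by gcongr
    linarith
  have hperiod := period_term_le (Nat.cast_nonneg z) hzqR (by positivity) hrn hQnR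
  have hcross := crossing_term_le (Nat.cast_nonneg z) (Nat.cast_nonneg q)
    (by positivity : (0 : ℝ) < L * T) (Nat.cast_pos.2 hT) (Nat.cast_nonneg n) hqT hvn
  have hround := rounding_term_le hzR (by linarith) (Nat.cast_nonneg L) (Nat.cast_nonneg Q) hε.le
    hqT hQn2
  have hgap : (2 * (z : ℝ) + 1) * S ≤ 3 * z * S := by
    gcongr
    linarith
  push_cast at hgain
  refine le_of_mul_le_mul_left (a := (z : ℝ)) ?_ (by linarith)
  linarith [(by positivity : 0 ≤ (z : ℝ) * (ε * n))]

lemma IsWellMatched.energy_drop {N : ℕ} (h : IsWellMatched ε z v (bukhMaQ q (L * T) n))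
    (hε : 0 < ε) (hε1 : ε ≤ 1) (hz : 0 < z) (hzq : z < q) (hL : 0 < L) (hT : 0 < T)
    (hqT : 96 * (q : ℝ) ^ 2 ≤ ε * T) (hn : L * T * T ≤ n) (hN : L * T * T ∣ N)
    (hvN : v.length ≤ N) :
    v.length * (ε ^ 2 / (144 * q ^ 2)) ≤
      energy (letterInd v) N L - energy (letterInd v) N (L * T * T) := by
  have : NeZero q := ⟨by omega⟩
  have hn0 : 0 < n := by
    refine lt_of_lt_of_le ?_ hn
    positivity
  have hv0 : (0 : ℝ) < v.length :=
    mod_cast h.length_pos hε hz (by rwa [length_bukhMaQ])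
  have hvn : (v.length : ℝ) ≤ 2 * q * n := by
    simpa [length_bukhMaQ] using h.length_le hε.le hzq
  have hqR : (0 : ℝ) < q := mod_cast NeZero.pos q
  refine le_of_mul_le_mul_left ?_ hv0
  calc (v.length : ℝ) * (v.length * (ε ^ 2 / (144 * q ^ 2)))
      = (v.length : ℝ) ^ 2 * (ε ^ 2 / (144 * q ^ 2)) := by ring
    _ ≤ (2 * q * n) ^ 2 * (ε ^ 2 / (144 * q ^ 2)) := by gcongr
    _ = (n * ε / 6) ^ 2 := by
        field_simp
        norm_num
    _ ≤ (∑ x ∈ range v.length, scaleGap (letterInd v) L (L * T * T) x) ^ 2 := by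
        gcongr
        exact h.le_sum_scaleGap hε hε1 hz hzq hL hT hqT hn
    _ ≤ _ := sq_sum_scaleGap_le (Dvd.intro _ (mul_assoc L T T).symm) hN hvN

end EnergyDrop

section Counting

variable {q s n z m : ℕ} {ε : ℝ} {v : List (Fin q)}

lemma sum_range_sub_add_le {e : ℕ → ℝ} {B : ℝ} (h0 : ∀ t, 0 ≤ e t) (hB : ∀ t, e t ≤ B)
    (d X : ℕ) : ∑ t ∈ range X, (e t - e (d + t)) ≤ d * B := by
  have hinit : ∑ t ∈ range d, e t ≤ d * B := by
    simpa using sum_le_card_nsmul (range d) e B fun t _ => hB t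
  have hmono : ∑ t ∈ range X, e t ≤ ∑ t ∈ range (d + X), e t :=
    sum_le_sum_of_subset_of_nonneg (range_mono (Nat.le_add_left X d)) fun t _ _ => h0 t
  rw [sum_range_add] at hmono
  rw [sum_sub_distrib]
  linarith

lemma card_mul_le_of_antitone {e : ℕ → ℝ} {B η : ℝ} {K : Finset ℕ} (he : Antitone e)
    (h0 : ∀ j, 0 ≤ e j) (hB : ∀ j, e j ≤ B) (hm : ∀ k ∈ K, m ≤ k)
    (hη : ∀ k ∈ K, η ≤ e (k - m) - e (k + m)) : #K * η ≤ 2 * m * B := by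
  have hsub : K ⊆ Ico m (K.sup id + 1) := fun k hk =>
    mem_Ico.2 ⟨hm k hk, Nat.lt_succ_of_le (le_sup (f := id) hk)⟩
  calc #K * η = ∑ _k ∈ K, η := by rw [sum_const, nsmul_eq_mul]
    _ ≤ ∑ k ∈ K, (e (k - m) - e (k + m)) := sum_le_sum hη
    _ ≤ ∑ k ∈ Ico m (K.sup id + 1), (e (k - m) - e (k + m)) :=
        sum_le_sum_of_subset_of_nonneg hsub fun k _ _ => sub_nonneg.2 (he (by omega))
    _ = ∑ t ∈ range (K.sup id + 1 - m), (e t - e (2 * m + t)) := by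
        rw [sum_Ico_eq_sum_range]
        refine sum_congr rfl fun t _ => ?_
        rw [Nat.add_sub_cancel_left, show m + t + m = 2 * m + t by ring]
    _ ≤ (2 * m : ℕ) * B := sum_range_sub_add_le h0 hB _ _
    _ = 2 * m * B := by push_cast; ring

lemma IsWellMatched.energy_drop_pow {k P : ℕ} (h : IsWellMatched ε z v (bukhMaQ q (s ^ k) n))
    (hε : 0 < ε) (hε1 : ε ≤ 1) (hs : 0 < s) (hz : 0 < z) (hzq : z < q)
    (hqs : 96 * (q : ℝ) ^ 2 ≤ ε * (s : ℝ) ^ m) (hmk : m ≤ k) (hkn : s ^ (k + m) ≤ n)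
    (hkP : k + m ≤ P) (hvP : v.length ≤ s ^ P) :
    v.length * (ε ^ 2 / (144 * q ^ 2)) ≤
      energy (letterInd v) (s ^ P) (s ^ (k - m)) - energy (letterInd v) (s ^ P) (s ^ (k + m)) := by
  have hk : s ^ (k - m) * s ^ m = s ^ k := by rw [← pow_add, Nat.sub_add_cancel hmk]
  have hkm : s ^ (k - m) * s ^ m * s ^ m = s ^ (k + m) := by rw [hk, pow_add]
  rw [← hk] at h
  rw [← hkm] at hkn ⊢
  exact h.energy_drop hε hε1 hz hzq (by positivity) (by positivity) (by exact_mod_cast hqs) hkn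
    (hkm ▸ pow_dvd_pow s hkP) hvP

lemma card_wellMatched_scales_le (hε : 0 < ε) (hε1 : ε ≤ 1) (hs : 2 ≤ s) (hz : 0 < z)
    (hzq : z < q) (hqs : 96 * (q : ℝ) ^ 2 ≤ ε * (s : ℝ) ^ m) {K : Finset ℕ}
    (hK : ∀ k ∈ K, m ≤ k ∧ s ^ (k + m) ≤ n ∧ IsWellMatched ε z v (bukhMaQ q (s ^ k) n)) :
    (#K : ℝ) ≤ 288 * m * q ^ 2 / ε ^ 2 := by
  rcases K.eq_empty_or_nonempty with rfl | ⟨k₀, hk₀⟩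
  · simp only [card_empty, Nat.cast_zero]
    positivity
  have : NeZero q := ⟨by omega⟩
  have hqR : (0 : ℝ) < q := mod_cast NeZero.pos q
  set P := n + v.length
  -- Truncating the exponent at `P` keeps the scale a divisor of `s ^ P`.
  set e : ℕ → ℝ := fun j => energy (letterInd v) (s ^ P) (s ^ min j P)
  have hdvd (j : ℕ) : s ^ min j P ∣ s ^ P := pow_dvd_pow s (min_le_right j P)
  have he : Antitone e := fun i j hij =>
    energy_le_energy_of_dvd (pow_dvd_pow s (min_le_min_right P hij)) (hdvd j)
  have heB (j : ℕ) : e j ≤ v.length :=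
    (energy_le (isSubdensity_letterInd v) (hdvd j)).trans (sum_sum_letterInd_le v _)
  have hvP : v.length ≤ s ^ P :=
    (Nat.le_add_left _ n).trans (Nat.lt_pow_self (by omega)).le
  have hdrop (k : ℕ) (hk : k ∈ K) :
      v.length * (ε ^ 2 / (144 * q ^ 2)) ≤ e (k - m) - e (k + m) := by
    obtain ⟨hmk, hkn, hmatch⟩ := hK k hk
    have hkP : k + m ≤ P := ((Nat.lt_pow_self (by omega)).le.trans hkn).trans (Nat.le_add_right _ _)
    simp only [e, min_eq_left hkP, min_eq_left (by omega : k - m ≤ P)]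
    exact hmatch.energy_drop_pow hε hε1 (by omega) hz hzq hqs hmk hkn hkP hvP
  have hv : (0 : ℝ) < v.length := by
    obtain ⟨-, hkn, hmatch⟩ := hK k₀ hk₀
    have hn : 0 < n := (by positivity : 0 < s ^ (k₀ + m)).trans_le hkn
    exact_mod_cast hmatch.length_pos hε hz (by rwa [length_bukhMaQ])
  have hcount := card_mul_le_of_antitone he (fun _ => energy_nonneg) heB
    (fun k hk => (hK k hk).1) hdrop
  rw [mul_left_comm, mul_comm (2 * (m : ℝ))] at hcount
  have hcard := le_of_mul_le_mul_left hcount hv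
  rw [le_div_iff₀ (by positivity)]
  rw [mul_div_assoc', div_le_iff₀ (by positivity)] at hcard
  linarith

lemma ncard_wellMatched_scales_le (hε : 0 < ε) (hε1 : ε ≤ 1) (hs : 2 ≤ s) (hz : 0 < z)
    (hzq : z < q) (hqs : 96 * (q : ℝ) ^ 2 ≤ ε * (s : ℝ) ^ m) :
    ({k : ℕ | s ^ k < n ∧ IsWellMatched ε z v (bukhMaQ q (s ^ k) n)}.ncard : ℝ) ≤
      2 * m + 288 * m * q ^ 2 / ε ^ 2 := by
  classical
  set R := Nat.clog s n
  have hlt {k : ℕ} : s ^ k < n ↔ k < R := (Nat.lt_clog_iff_pow_lt (by omega)).symm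
  set K := {k ∈ Ico m (R - m) | IsWellMatched ε z v (bukhMaQ q (s ^ k) n)}
  have hK : (#K : ℝ) ≤ 288 * m * q ^ 2 / ε ^ 2 := by
    refine card_wellMatched_scales_le (n := n) (v := v) hε hε1 hs hz hzq hqs fun k hk => ?_
    obtain ⟨hkI, hmatch⟩ := mem_filter.1 hk
    obtain ⟨hmk, hkR⟩ := mem_Ico.1 hkI
    exact ⟨hmk, (hlt.2 (by omega)).le, hmatch⟩
  have hcover : {k : ℕ | s ^ k < n ∧ IsWellMatched ε z v (bukhMaQ q (s ^ k) n)} ⊆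
      (range m ∪ Ico (R - m) R ∪ K : Finset ℕ) := by
    rintro k ⟨hkn, hmatch⟩
    have hkR := hlt.1 hkn
    simp only [coe_union, Set.mem_union, mem_coe, mem_range, mem_Ico, K, mem_filter, hmatch,
      and_true]
    omega
  have hcard : {k : ℕ | s ^ k < n ∧ IsWellMatched ε z v (bukhMaQ q (s ^ k) n)}.ncard ≤
      m + m + #K := by
    refine (Set.ncard_le_ncard hcover (finite_toSet _)).trans ?_
    rw [Set.ncard_coe_finset]
    refine (card_union_le _ _).trans (Nat.add_le_add_right ((card_union_le _ _).trans ?_) _)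
    rw [card_range, Nat.card_Ico]
    omega
  have hcardR : (_ : ℝ) ≤ _ := Nat.cast_le.2 hcard
  push_cast at hcardR
  linarith

end Counting

lemma mul_sq_le_mul_pow {q s : ℕ} {ε : ℝ} (hs : 2 ≤ s) (hεs : 1 ≤ ε * s) :
    96 * (q : ℝ) ^ 2 ≤ ε * (s : ℝ) ^ (2 * q + 8) := by
  have hsR : (2 : ℝ) ≤ s := mod_cast hs
  have hq : (q : ℝ) ≤ 2 ^ q := mod_cast Nat.lt_two_pow_self.le
  calc 96 * (q : ℝ) ^ 2 ≤ 128 * (2 ^ q) ^ 2 := by gcongr; norm_num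
    _ = 2 ^ (2 * q + 7) := by ring
    _ ≤ 1 * (s : ℝ) ^ (2 * q + 7) := by rw [one_mul]; gcongr
    _ ≤ ε * s * (s : ℝ) ^ (2 * q + 7) := by gcongr
    _ = ε * (s : ℝ) ^ (2 * q + 8) := by ring

lemma isWellMatched_of_deletions_le {q z : ℕ} {ε δ γ : ℝ} {u v y : List (Fin q)} (hε : 0 ≤ ε)
    (hzq : z < q)
    (hδγ : γ + 2 * z * δ ≤ (1 - ε) * ((2 * (q : ℝ) - 1) * z - (z : ℝ) ^ 2) / q)
    (huv : u.Sublist v) (huy : u.Sublist y) (hδ : (y.length : ℝ) - u.length ≤ δ * y.length)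
    (hγ : (v.length : ℝ) - u.length ≤ γ * y.length) : IsWellMatched ε z v y := by
  refine ⟨u, huv, huy, ?_⟩
  have hzqR : (z : ℝ) + 1 ≤ q := mod_cast hzq
  have hq : (0 : ℝ) < q := by linarith [Nat.cast_nonneg (α := ℝ) z]
  have hthreshold : (1 - ε) * ((2 * (q : ℝ) - 1) * z - (z : ℝ) ^ 2) / q ≤
      2 * z - (z * (z + 1) / q + z * ε) := by
    have hslack : 0 ≤ ε * z * (q - 1 - z) / q :=
      div_nonneg (mul_nonneg (by positivity) (by linarith)) hq.le
    have hsplit : (1 - ε) * ((2 * (q : ℝ) - 1) * z - (z : ℝ) ^ 2) / q =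
        2 * z - (z * (z + 1) / q + z * ε) - ε * z * (q - 1 - z) / q := by
      field_simp
      ring
    linarith
  have hdel : (y.length : ℝ) * (γ + 2 * z * δ) ≤
      y.length * (2 * z - (z * (z + 1) / q + z * ε)) := by
    gcongr
    exact hδγ.trans hthreshold
  have hmissed := mul_le_mul_of_nonneg_left hδ (by positivity : 0 ≤ 2 * (z : ℝ))
  linarith

theorem stmt6_general {q s n z : ℕ} {ε δ γ : ℝ} (hε : ε ∈ Set.Ioo (0 : ℝ) 1) (hs : 1 / ε ≤ s)
    (v : List (Fin q)) (hz : 1 ≤ z) (hzq : z ≤ q - 1)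
    (hδγ : γ + 2 * z * δ ≤ (1 - ε) * ((2 * (q : ℝ) - 1) * z - (z : ℝ) ^ 2) / q) :
    ({k : ℕ | s ^ k < n ∧ ∃ u : List (Fin q), u.Sublist v ∧ u.Sublist (bukhMaQ q (s ^ k) n) ∧
        (n : ℝ) - u.length ≤ δ * n ∧ (v.length : ℝ) - u.length ≤ γ * n}.ncard : ℝ) ≤
      2000 * q ^ 3 / ε ^ 2 := by
  obtain ⟨hε0, hε1⟩ := hε
  have hzq' : z < q := by omega
  have : NeZero q := ⟨by omega⟩
  have hs2 : 2 ≤ s := by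
    have : (1 : ℝ) < s := (one_lt_one_div hε0 hε1).trans_le hs
    exact_mod_cast this
  have hεs : 1 ≤ ε * s := by rwa [div_le_iff₀' hε0] at hs
  have hcount := ncard_wellMatched_scales_le (n := n) (v := v) hε0 hε1.le hs2 hz hzq'
    (mul_sq_le_mul_pow hs2 hεs)
  refine (Nat.cast_le.2 (Set.ncard_le_ncard ?_ ?_)).trans (hcount.trans ?_)
  · rintro k ⟨hkn, u, huv, hu, hδ, hγ⟩
    refine ⟨hkn, isWellMatched_of_deletions_le hε0.le hzq' hδγ huv hu ?_ ?_⟩ <;>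
      rwa [length_bukhMaQ]
  · exact (Set.finite_lt_nat n).subset fun k hk => (Nat.lt_pow_self (by omega)).trans hk.1
  · have hqR : (2 : ℝ) ≤ q := mod_cast (by omega : 2 ≤ q)
    have hm : ((2 * q + 8 : ℕ) : ℝ) ≤ 6 * q := by push_cast; linarith
    have hε2 : ε ^ 2 ≤ 1 := pow_le_one₀ hε0.le hε1.le
    rw [le_div_iff₀ (by positivity), add_mul, div_mul_cancel₀ _ (by positivity)]
    calc 2 * ((2 * q + 8 : ℕ) : ℝ) * ε ^ 2 + 288 * ((2 * q + 8 : ℕ) : ℝ) * (q : ℝ) ^ 2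
        ≤ 2 * (6 * (q : ℝ)) * 1 + 288 * (6 * (q : ℝ)) * (q : ℝ) ^ 2 := by gcongr
      _ = 12 * (q : ℝ) * 1 ^ 2 + 1728 * (q : ℝ) ^ 3 := by ring
      _ ≤ 12 * (q : ℝ) * q ^ 2 + 1728 * (q : ℝ) ^ 3 := by gcongr; linarith
      _ ≤ 2000 * (q : ℝ) ^ 3 := by linarith [pow_pos (two_pos.trans_le hqR) 3]

theorem stmt6 :
    ∃ c : ℝ, 0 < c ∧
      ∀ q : ℕ, 2 ≤ q → ∀ ε : ℝ, ε ∈ Set.Ioo (0 : ℝ) 1 → ∀ s : ℕ, (s : ℝ) = 1 / ε ^ 4 →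
        ∃ n₀ : ℕ, ∀ n : ℕ, n₀ ≤ n →
          ∀ v : List (Fin q), ∀ z : ℕ, 1 ≤ z → z ≤ q - 1 →
            ∀ δ γ : ℝ, 0 ≤ δ → 0 ≤ γ →
              γ + 2 * z * δ ≤ (1 - ε) * ((2 * (q : ℝ) - 1) * z - (z : ℝ) ^ 2) / q →
              (({k : ℕ | s ^ k < n ∧
                  ∃ u : List (Fin q), u.Sublist v ∧ u.Sublist (bukhMaQ q (s ^ k) n) ∧
                    (n : ℝ) - u.length ≤ δ * n ∧
                    (v.length : ℝ) - u.length ≤ γ * n} : Set ℕ).ncard : ℝ)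
                ≤ c * q ^ 5 / ε ^ 2 := by
  refine ⟨2000, by norm_num, fun q hq ε hε s hs => ⟨0, fun n _ v z hz hzq δ γ _ _ hδγ => ?_⟩⟩
  have hεs : 1 / ε ≤ s := hs ▸ one_div_le_one_div_of_le (pow_pos hε.1 4)
    (pow_le_of_le_one hε.1.le hε.2.le four_ne_zero)
  refine (stmt6_general hε hεs v hz hzq hδγ).trans ?_
  have hqR : (1 : ℝ) ≤ q := mod_cast one_le_two.trans hq
  gcongr
  norm_num
end

section
/- Let u and w be nonempty binary strings with count₀(u) ≤ count₁(w), and let A > 0 be a real such that 2A·(|u| + |w|) ≤ (1 − 3·bias(u))·|u| − (1 − bias(w))·|w|. Then |bias(w) − bias(u)| ≥ A/3. -/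
/-- The bias of a binary string: `(count₁(w) − count₀(w)) / |w|`. -/
noncomputable def bias (w : List Bool) : ℝ :=
  ((w.count true : ℝ) - (w.count false : ℝ)) / w.length

/-!
Put `x = 1 - bias u` and `y = 1 + bias w`. Then `x * |u| = 2 * count₀(u)` and
`y * |w| = 2 * count₁(w)`, so the hypothesis on the counts reads `x * |u| ≤ y * |w|`. In these
variables the right-hand side of the hypothesis on `A` is at most
`(bias w - bias u) * (|u| + |w|)` exactly when `2 * x * |u| ≤ x * |w| + y * |u|`, and this is
AM-GM: multiplied by `|w|`, it follows from `2 * |u| * |w| ≤ |u| ^ 2 + |w| ^ 2`.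
Hence `2 * A ≤ bias w - bias u`, with equality for `u = 0ⁿ`, `w = 1ⁿ`, `A = 1`.
-/

theorem two_mul_mul_le_of_mul_le_mul {R : Type*} [CommSemiring R] [LinearOrder R]
    [IsStrictOrderedRing R] [ExistsAddOfLE R] {x y m n : R} (hx : 0 ≤ x) (hm : 0 ≤ m)
    (hn : 0 < n) (h : x * m ≤ y * n) : 2 * x * m ≤ x * n + y * m := by
  refine le_of_mul_le_mul_right ?_ hn
  calc 2 * x * m * n = x * (2 * m * n) := by ring
    _ ≤ x * (m ^ 2 + n ^ 2) := mul_le_mul_of_nonneg_left (two_mul_le_add_sq m n) hx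
    _ = x * n * n + x * m * m := by ring
    _ ≤ x * n * n + y * n * m := by gcongr
    _ = (x * n + y * m) * n := by ring

theorem bias_le_one (w : List Bool) : bias w ≤ 1 := by
  refine div_le_one_of_le₀ ?_ (Nat.cast_nonneg _)
  have htrue : (w.count true : ℝ) ≤ w.length := mod_cast List.count_le_length
  exact (sub_le_self _ (Nat.cast_nonneg _)).trans htrue

theorem bias_mul_length (w : List Bool) :
    bias w * w.length = (w.count true : ℝ) - w.count false :=
  div_mul_cancel_of_imp fun hlen ↦ by
    simp [List.length_eq_zero_iff.mp (Nat.cast_eq_zero.mp hlen)]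

theorem one_sub_bias_mul_length (w : List Bool) :
    (1 - bias w) * w.length = 2 * w.count false := by
  have hsum : (w.count true : ℝ) + w.count false = w.length :=
    mod_cast List.count_true_add_count_false w
  linear_combination -bias_mul_length w - hsum

theorem one_add_bias_mul_length (w : List Bool) :
    (1 + bias w) * w.length = 2 * w.count true := by
  have hsum : (w.count true : ℝ) + w.count false = w.length :=
    mod_cast List.count_true_add_count_false w
  linear_combination bias_mul_length w - hsum

theorem one_sub_bias_mul_length_le_one_add_bias_mul_length {u w : List Bool}
    (hcount : u.count false ≤ w.count true) :
    (1 - bias u) * u.length ≤ (1 + bias w) * w.length := by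
  rw [one_sub_bias_mul_length, one_add_bias_mul_length]
  gcongr

theorem sub_le_bias_sub_bias_mul_length_add_length {u w : List Bool} (hw : w ≠ [])
    (hcount : u.count false ≤ w.count true) :
    (1 - 3 * bias u) * u.length - (1 - bias w) * w.length ≤
      (bias w - bias u) * ((u.length : ℝ) + w.length) := by
  have hlen : (0 : ℝ) < w.length := mod_cast List.length_pos_iff.mpr hw
  have hamgm : 2 * (1 - bias u) * u.length ≤
      (1 - bias u) * w.length + (1 + bias w) * u.length :=
    two_mul_mul_le_of_mul_le_mul (sub_nonneg.mpr (bias_le_one u)) (Nat.cast_nonneg _) hlen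
      (one_sub_bias_mul_length_le_one_add_bias_mul_length hcount)
  linear_combination hamgm

theorem stmt12_general (u w : List Bool) (hu : u ≠ []) (hw : w ≠ [])
    (hcount : u.count false ≤ w.count true) (A : ℝ)
    (h : 2 * A * ((u.length : ℝ) + w.length) ≤
      (1 - 3 * bias u) * u.length - (1 - bias w) * w.length) :
    2 * A ≤ bias w - bias u := by
  have hlen : (0 : ℝ) < (u.length : ℝ) + w.length :=
    mod_cast add_pos (List.length_pos_iff.mpr hu) (List.length_pos_iff.mpr hw)
  exact le_of_mul_le_mul_right
    (h.trans (sub_le_bias_sub_bias_mul_length_add_length hw hcount)) hlen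

theorem stmt12 (u w : List Bool) (hu : u ≠ []) (hw : w ≠ [])
    (hcount : u.count false ≤ w.count true) (A : ℝ) (hA : 0 < A)
    (h : 2 * A * ((u.length : ℝ) + w.length) ≤
      (1 - 3 * bias u) * u.length - (1 - bias w) * w.length) :
    A / 3 ≤ |bias w - bias u| := by
  have hbias : 2 * A ≤ bias w - bias u := stmt12_general u w hu hw hcount A h
  linarith [le_abs_self (bias w - bias u)]
end

section
/- Let q ≥ 2 be an integer and let (p₁, …, p_q) and (f₁, …, f_q) be vectors of positive reals, each summing to 1, satisfying f₁p₁ ≥ f₂p₂ ≥ ⋯ ≥ f_q p_q. Let z be an integer with 1 ≤ z < q and set w = ⌊z/2⌋ + 1. Then: (1) if z is even, ((3z+2)/2)·f_w p_w + (2z+1)·∑_{j=w+1}^{q} f_j p_j ≤ 1; and (2) if z is odd, ((z+1)/2)·f_w p_w + (2z+1)·∑_{j=w+1}^{q} f_j p_j ≤ 1. -/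
/-!
For `v₁, …, vₙ ∈ [0, t]` and an integer `z`, the difference `(∑ vᵢ - z t)² + z t² - ∑ vᵢ²` is affine
in each `vᵢ`, so it is minimal at a vertex of the cube `[0, t]ⁿ`. If `k` of the coordinates equal
`t` and the others vanish, it is `(k - z) (k - z - 1) t² ≥ 0`, as `k - z` is an integer. Combined
with `∑ vᵢ² ≤ t ∑ vᵢ`, this gives `(2 z + 1) ∑ vᵢ² ≤ (∑ vᵢ)² + z (z + 1) t²` for `z ≥ 0`.

Apply this to `vᵢ = √(min (fᵢ pᵢ) (f_w p_w))` and `t = √(f_w p_w)`: by Cauchy–Schwarz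
`(∑ vᵢ)² ≤ (∑ fᵢ) (∑ pᵢ)`, and by monotonicity `∑ vᵢ² = w f_w p_w + ∑_{j > w} fⱼ pⱼ`.
-/

section OrderedRing

variable {ι R : Type*} [CommRing R] [LinearOrder R] [IsStrictOrderedRing R]
  {s : Finset ι} {v : ι → R} {t : R}

theorem sum_sq_le_sq_sum_sub_intCast_mul_add (hv : ∀ i ∈ s, v i ∈ Set.Icc 0 t) (z : ℤ) :
    ∑ i ∈ s, v i ^ 2 ≤ (∑ i ∈ s, v i - z * t) ^ 2 + z * t ^ 2 := by
  classical
  induction s using Finset.induction_on generalizing z with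
  | empty =>
    have mul_succ_nonneg : 0 ≤ z * (z + 1) := by
      rcases le_or_gt 0 z with hz | hz <;> nlinarith
    have cast_mul_succ_nonneg : (0 : R) ≤ z * (z + 1) := by exact_mod_cast mul_succ_nonneg
    calc ∑ i ∈ ∅, v i ^ 2 ≤ z * (z + 1) * t ^ 2 := by
          simpa only [Finset.sum_empty] using mul_nonneg cast_mul_succ_nonneg (sq_nonneg t)
      _ = (∑ i ∈ ∅, v i - z * t) ^ 2 + z * t ^ 2 := by rw [Finset.sum_empty]; ring
  | insert a s ha ih =>
    obtain ⟨hva, hvs⟩ := Finset.forall_mem_insert _ _ _ |>.1 hv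
    have at_zero := ih hvs z
    have at_t := ih hvs (z - 1)
    push_cast at at_t
    rw [Finset.sum_insert ha, Finset.sum_insert ha]
    obtain ht | ht := (hva.1.trans hva.2).eq_or_lt
    · have hva₀ : v a = 0 := le_antisymm (hva.2.trans ht.ge) hva.1
      simpa only [hva₀, zero_pow two_ne_zero, zero_add] using at_zero
    · -- The bound is affine in `v a`; its values at `0` and `t` are `at_zero` and `at_t`.
      refine le_of_mul_le_mul_left ?_ ht
      have hva_sub : 0 ≤ t - v a := sub_nonneg.2 hva.2
      have hva_nonneg : 0 ≤ v a := hva.1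
      linear_combination (t - v a) * at_zero + v a * at_t

theorem two_mul_add_one_mul_sum_sq_le_sq_sum_add (hv : ∀ i ∈ s, v i ∈ Set.Icc 0 t) (z : ℕ) :
    (2 * z + 1) * ∑ i ∈ s, v i ^ 2 ≤ (∑ i ∈ s, v i) ^ 2 + z * (z + 1) * t ^ 2 := by
  have sum_sq_le : ∑ i ∈ s, v i ^ 2 ≤ t * ∑ i ∈ s, v i := by
    rw [Finset.mul_sum]
    refine Finset.sum_le_sum fun i hi => ?_
    rw [sq]
    exact mul_le_mul_of_nonneg_right (hv i hi).2 (hv i hi).1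
  have affine_bound := sum_sq_le_sq_sum_sub_intCast_mul_add hv z
  rw [Int.cast_natCast] at affine_bound
  linear_combination affine_bound + 2 * (z : R) * sum_sq_le

end OrderedRing

theorem two_mul_add_one_mul_sum_min_mul_le {ι : Type*} {s : Finset ι} {f p : ι → ℝ} {m : ℝ}
    (hf : ∀ i ∈ s, 0 ≤ f i) (hp : ∀ i ∈ s, 0 ≤ p i) (hm : 0 ≤ m) (z : ℕ) :
    (2 * z + 1) * ∑ i ∈ s, min (f i * p i) m ≤
      (∑ i ∈ s, f i) * ∑ i ∈ s, p i + z * (z + 1) * m := by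
  set v : ι → ℝ := fun i => √(min (f i * p i) m)
  have v_sq : ∀ i ∈ s, v i ^ 2 = min (f i * p i) m := fun i hi =>
    Real.sq_sqrt (le_min (mul_nonneg (hf i hi) (hp i hi)) hm)
  have v_mem : ∀ i ∈ s, v i ∈ Set.Icc 0 √m := fun i _ =>
    ⟨Real.sqrt_nonneg _, Real.sqrt_le_sqrt (min_le_right _ _)⟩
  have cauchy_schwarz : (∑ i ∈ s, v i) ^ 2 ≤ (∑ i ∈ s, f i) * ∑ i ∈ s, p i :=
    Finset.sum_sq_le_sum_mul_sum_of_sq_le_mul s hf hp fun i hi =>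
      (v_sq i hi).trans_le (min_le_left _ _)
  calc (2 * z + 1) * ∑ i ∈ s, min (f i * p i) m
      = (2 * z + 1) * ∑ i ∈ s, v i ^ 2 := by rw [Finset.sum_congr rfl v_sq]
    _ ≤ (∑ i ∈ s, v i) ^ 2 + z * (z + 1) * √m ^ 2 :=
        two_mul_add_one_mul_sum_sq_le_sq_sum_add v_mem z
    _ ≤ (∑ i ∈ s, f i) * ∑ i ∈ s, p i + z * (z + 1) * m := by
      rw [Real.sq_sqrt hm]
      gcongr

theorem sum_min_eq_nsmul_add_sum_of_antitoneOn {M : Type*} [AddCommMonoid M] [LinearOrder M]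
    {a : ℕ → M} {q w : ℕ} (ha : AntitoneOn a (Set.Icc 1 q)) (hw : w ∈ Set.Icc 1 q) :
    ∑ i ∈ Finset.Icc 1 q, min (a i) (a w) = w • a w + ∑ i ∈ Finset.Icc (w + 1) q, a i := by
  have head : ∑ i ∈ Finset.Ioc 0 w, min (a i) (a w) = w • a w := by
    rw [Finset.sum_congr rfl fun i hi => ?_, Finset.sum_const, Nat.card_Ioc, Nat.sub_zero]
    rw [Finset.mem_Ioc] at hi
    exact min_eq_right (ha ⟨hi.1, hi.2.trans hw.2⟩ hw hi.2)
  have tail : ∑ i ∈ Finset.Ioc w q, min (a i) (a w) = ∑ i ∈ Finset.Ioc w q, a i := by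
    refine Finset.sum_congr rfl fun i hi => ?_
    rw [Finset.mem_Ioc] at hi
    exact min_eq_left (ha hw ⟨hw.1.trans hi.1.le, hi.2⟩ hi.1.le)
  rw [← head, Finset.Icc_add_one_left_eq_Ioc, ← tail,
    Finset.sum_Ioc_consecutive _ w.zero_le hw.2, ← Finset.Icc_add_one_left_eq_Ioc, zero_add]

section Antitone

variable {q : ℕ} {f p : ℕ → ℝ}

theorem two_mul_add_one_mul_add_sum_Icc_le (hf : ∀ i ∈ Finset.Icc 1 q, 0 ≤ f i)
    (hp : ∀ i ∈ Finset.Icc 1 q, 0 ≤ p i) (hfp : AntitoneOn (fun i => f i * p i) (Set.Icc 1 q))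
    {w : ℕ} (hw : w ∈ Set.Icc 1 q) (z : ℕ) :
    (2 * z + 1) * (w * (f w * p w) + ∑ j ∈ Finset.Icc (w + 1) q, f j * p j) ≤
      (∑ i ∈ Finset.Icc 1 q, f i) * ∑ i ∈ Finset.Icc 1 q, p i + z * (z + 1) * (f w * p w) := by
  have hw' : w ∈ Finset.Icc 1 q := Finset.mem_Icc.2 hw
  rw [← nsmul_eq_mul w, ← sum_min_eq_nsmul_add_sum_of_antitoneOn hfp hw]
  exact two_mul_add_one_mul_sum_min_mul_le hf hp (mul_nonneg (hf w hw') (hp w hw')) z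

theorem stmt16_general (hf : ∀ i ∈ Finset.Icc 1 q, 0 ≤ f i) (hp : ∀ i ∈ Finset.Icc 1 q, 0 ≤ p i)
    (hfp : AntitoneOn (fun i => f i * p i) (Set.Icc 1 q)) {z : ℕ} (hz : z / 2 < q) :
    (Even z →
      ((3 * (z : ℝ) + 2) / 2) * (f (z / 2 + 1) * p (z / 2 + 1)) +
        (2 * (z : ℝ) + 1) * ∑ j ∈ Finset.Icc (z / 2 + 2) q, f j * p j ≤
          (∑ i ∈ Finset.Icc 1 q, f i) * ∑ i ∈ Finset.Icc 1 q, p i) ∧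
    (Odd z →
      (((z : ℝ) + 1) / 2) * (f (z / 2 + 1) * p (z / 2 + 1)) +
        (2 * (z : ℝ) + 1) * ∑ j ∈ Finset.Icc (z / 2 + 2) q, f j * p j ≤
          (∑ i ∈ Finset.Icc 1 q, f i) * ∑ i ∈ Finset.Icc 1 q, p i) := by
  have bound := two_mul_add_one_mul_add_sum_Icc_le hf hp hfp (w := z / 2 + 1)
    ⟨Nat.le_add_left 1 _, hz⟩ z
  rw [Nat.cast_add_one] at bound
  refine ⟨fun hz_even => ?_, fun hz_odd => ?_⟩
  · have z_eq : (z : ℝ) = 2 * (z / 2 : ℕ) := by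
      exact_mod_cast (Nat.two_mul_div_two_of_even hz_even).symm
    linear_combination bound + (2 * z + 1) / 2 * (f (z / 2 + 1) * p (z / 2 + 1)) * z_eq
  · have z_eq : (z : ℝ) = 2 * (z / 2 : ℕ) + 1 := by
      exact_mod_cast (Nat.two_mul_div_two_add_one_of_odd hz_odd).symm
    linear_combination bound + (2 * z + 1) / 2 * (f (z / 2 + 1) * p (z / 2 + 1)) * z_eq

end Antitone

theorem stmt16 (q : ℕ) (hq : 2 ≤ q) (f p : ℕ → ℝ)
    (hf : ∀ i ∈ Finset.Icc 1 q, 0 < f i) (hp : ∀ i ∈ Finset.Icc 1 q, 0 < p i)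
    (hfs : ∑ i ∈ Finset.Icc 1 q, f i = 1) (hps : ∑ i ∈ Finset.Icc 1 q, p i = 1)
    (hmono : ∀ i j : ℕ, 1 ≤ i → i ≤ j → j ≤ q → f j * p j ≤ f i * p i)
    (z : ℕ) (hz1 : 1 ≤ z) (hz2 : z < q) :
    (Even z →
      ((3 * (z : ℝ) + 2) / 2) * (f (z / 2 + 1) * p (z / 2 + 1)) +
        (2 * (z : ℝ) + 1) * ∑ j ∈ Finset.Icc (z / 2 + 2) q, f j * p j ≤ 1) ∧
    (Odd z →
      (((z : ℝ) + 1) / 2) * (f (z / 2 + 1) * p (z / 2 + 1)) +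
        (2 * (z : ℝ) + 1) * ∑ j ∈ Finset.Icc (z / 2 + 2) q, f j * p j ≤ 1) := by
  simpa only [hfs, hps, one_mul] using stmt16_general (fun i hi => (hf i hi).le)
    (fun i hi => (hp i hi).le) (fun i hi j hj hij => hmono i j hi.1 hij hj.2)
    ((Nat.div_le_self z 2).trans_lt hz2)
end

section
/- Let q ≥ 2 be an integer, let f₁, …, f_q and p₁, …, p_q be positive reals with ∑_{i=1}^{q} fᵢ = F and ∑_{i=1}^{q} pᵢ = P, satisfying f₁p₁ ≥ f₂p₂ ≥ ⋯ ≥ f_q p_q and f₁p₁ ≤ m for some real m > 0. Then ∑_{i=1}^{q} fᵢpᵢ ≤ f_max(F, P, m), where f_max(F,P,m) is defined piecewise by: f_max = FP if FP ≤ m; f_max = u·m + (√(FP) − u·√m)² if FP/(u+1)² ≤ m < FP/u² for an integer u ∈ {1, …, q−1}; and f_max = m·q if m < FP/q². -/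
/-!
Put `xᵢ = √(fᵢ pᵢ)`. Then `0 ≤ xᵢ ≤ √m`, and `∑ xᵢ ≤ √(F P)` by Cauchy–Schwarz, so it suffices to
bound `∑ xᵢ²` for numbers in `[0, M]` with sum at most `S`. The bound `u M² + (S - u M)²` is the
value at `u` entries equal to `M` and one equal to `S - u M`. It holds for every natural number `u`,
not just for `u = ⌊S / M⌋` where it is sharpest, and this freedom in `u` makes it provable by adding
one entry at a time; `u = 0` is the bound by `F P`.
-/

open Finset

section

variable {ι : Type*} {s : Finset ι}

theorem sum_sq_le_nat_mul_sq_add_sq {x : ι → ℝ} {M S : ℝ} (hx : ∀ i ∈ s, 0 ≤ x i)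
    (hxM : ∀ i ∈ s, x i ≤ M) (hS : ∑ i ∈ s, x i ≤ S) (u : ℕ) :
    ∑ i ∈ s, x i ^ 2 ≤ u * M ^ 2 + (S - u * M) ^ 2 := by
  induction s using Finset.cons_induction generalizing S u with
  | empty => simpa only [sum_empty] using by positivity
  | cons a t ha ih =>
    simp only [forall_mem_cons] at hx hxM
    rw [sum_cons] at hS ⊢
    have hsum : ∑ i ∈ t, x i ≤ S - x a := by linarith
    have hrest : 0 ≤ S - x a := (sum_nonneg hx.2).trans hsum
    -- The other entries have sum at most `S - x a`; if that is less than `u * M`, bound their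
    -- squares with `u - 1` in place of `u`.
    rcases le_or_gt (u * M) (S - x a) with hle | hlt
    · have hmul : 0 ≤ x a * (S - x a - u * M) := mul_nonneg hx.1 (sub_nonneg.2 hle)
      calc x a ^ 2 + ∑ i ∈ t, x i ^ 2
          ≤ x a ^ 2 + (u * M ^ 2 + (S - x a - u * M) ^ 2) := by gcongr; exact ih hx.2 hxM.2 hsum u
        _ ≤ u * M ^ 2 + (S - u * M) ^ 2 := by linarith
    · have hu : u ≠ 0 := by
        rintro rfl
        exact hlt.not_ge (by simpa only [Nat.cast_zero, zero_mul] using hrest)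
      obtain ⟨v, rfl⟩ := Nat.exists_eq_add_one_of_ne_zero hu
      push_cast at hlt ⊢
      have hmul : 0 ≤ (M - x a) * ((v + 1) * M - (S - x a)) :=
        mul_nonneg (sub_nonneg.2 hxM.1) (sub_nonneg.2 hlt.le)
      calc x a ^ 2 + ∑ i ∈ t, x i ^ 2
          ≤ x a ^ 2 + (v * M ^ 2 + (S - x a - v * M) ^ 2) := by gcongr; exact ih hx.2 hxM.2 hsum v
        _ ≤ (v + 1) * M ^ 2 + (S - (v + 1) * M) ^ 2 := by linarith

theorem sum_sqrt_mul_le_sqrt_sum_mul_sum {f p : ι → ℝ} (hf : ∀ i ∈ s, 0 ≤ f i)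
    (hp : ∀ i ∈ s, 0 ≤ p i) :
    ∑ i ∈ s, √(f i * p i) ≤ √((∑ i ∈ s, f i) * ∑ i ∈ s, p i) :=
  Real.le_sqrt_of_sq_le <| sum_sq_le_sum_mul_sum_of_sq_le_mul s hf hp fun i hi =>
    (Real.sq_sqrt (mul_nonneg (hf i hi) (hp i hi))).le

theorem sum_mul_le_nat_mul_add_sq_sqrt {f p : ι → ℝ} {F P m : ℝ} (hm : 0 ≤ m)
    (hf : ∀ i ∈ s, 0 ≤ f i) (hp : ∀ i ∈ s, 0 ≤ p i) (hF : ∑ i ∈ s, f i ≤ F)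
    (hP : ∑ i ∈ s, p i ≤ P) (hfp : ∀ i ∈ s, f i * p i ≤ m) (u : ℕ) :
    ∑ i ∈ s, f i * p i ≤ u * m + (√(F * P) - u * √m) ^ 2 := by
  have hsqrt : ∑ i ∈ s, √(f i * p i) ≤ √(F * P) :=
    (sum_sqrt_mul_le_sqrt_sum_mul_sum hf hp).trans <| Real.sqrt_le_sqrt <|
      mul_le_mul hF hP (sum_nonneg hp) ((sum_nonneg hf).trans hF)
  calc ∑ i ∈ s, f i * p i
      = ∑ i ∈ s, √(f i * p i) ^ 2 :=
        sum_congr rfl fun i hi => (Real.sq_sqrt (mul_nonneg (hf i hi) (hp i hi))).symm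
    _ ≤ u * √m ^ 2 + (√(F * P) - u * √m) ^ 2 :=
        sum_sq_le_nat_mul_sq_add_sq (fun _ _ => Real.sqrt_nonneg _)
          (fun i hi => Real.sqrt_le_sqrt (hfp i hi)) hsqrt u
    _ = u * m + (√(F * P) - u * √m) ^ 2 := by rw [Real.sq_sqrt hm]

theorem stmt18_general {f p : ι → ℝ} {F P m : ℝ} (hm : 0 ≤ m)
    (hf : ∀ i ∈ s, 0 ≤ f i) (hp : ∀ i ∈ s, 0 ≤ p i) (hF : ∑ i ∈ s, f i ≤ F)
    (hP : ∑ i ∈ s, p i ≤ P) (hfp : ∀ i ∈ s, f i * p i ≤ m) :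
    ∑ i ∈ s, f i * p i ≤ F * P ∧
    (∀ u : ℕ, ∑ i ∈ s, f i * p i ≤ u * m + (√(F * P) - u * √m) ^ 2) ∧
    ∑ i ∈ s, f i * p i ≤ m * #s := by
  have hbound := sum_mul_le_nat_mul_add_sq_sqrt hm hf hp hF hP hfp
  have hFP : 0 ≤ F * P := mul_nonneg ((sum_nonneg hf).trans hF) ((sum_nonneg hp).trans hP)
  refine ⟨?_, hbound, ?_⟩
  · simpa [Real.sq_sqrt hFP] using hbound 0
  · simpa [mul_comm] using sum_le_card_nsmul s _ m hfp

end

theorem stmt18 (q : ℕ) (hq : 2 ≤ q) (f p : ℕ → ℝ) (F P m : ℝ) (hm : 0 < m)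
    (hf : ∀ i ∈ Finset.Icc 1 q, 0 < f i) (hp : ∀ i ∈ Finset.Icc 1 q, 0 < p i)
    (hF : ∑ i ∈ Finset.Icc 1 q, f i = F) (hP : ∑ i ∈ Finset.Icc 1 q, p i = P)
    (hmono : ∀ i j : ℕ, 1 ≤ i → i ≤ j → j ≤ q → f j * p j ≤ f i * p i)
    (hm1 : f 1 * p 1 ≤ m) :
    (F * P ≤ m → ∑ i ∈ Finset.Icc 1 q, f i * p i ≤ F * P) ∧
    (∀ u : ℕ, 1 ≤ u → u ≤ q - 1 →
      F * P / ((u : ℝ) + 1) ^ 2 ≤ m → m < F * P / (u : ℝ) ^ 2 →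
      ∑ i ∈ Finset.Icc 1 q, f i * p i ≤
        u * m + (Real.sqrt (F * P) - u * Real.sqrt m) ^ 2) ∧
    (m < F * P / (q : ℝ) ^ 2 → ∑ i ∈ Finset.Icc 1 q, f i * p i ≤ m * q) := by
  obtain ⟨hFP, hu, hcard⟩ := stmt18_general hm.le (fun i hi => (hf i hi).le)
    (fun i hi => (hp i hi).le) hF.le hP.le fun i hi =>
      (hmono 1 i le_rfl (mem_Icc.1 hi).1 (mem_Icc.1 hi).2).trans hm1
  exact ⟨fun _ => hFP, fun u _ _ _ _ => hu u, fun _ => by simpa using hcard⟩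
end
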